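/- Cancellation of higher order terms for k = 2 with general H (Corollary 4.9, estimate (L), for classical functions). Let n ≥ 3, Ω ⊆ ℝⁿ a domain, k = 2, and H : Ω×ℝ×ℝⁿ → Sym_n(ℝ) C^{1,1}_loc. Fix concentric balls with closure(B_{2R}) ⊂ Ω, and constants M > 0 and c₀ > 0. Then there is a constant C, depending only on n, R, H, M and c₀, such that the following holds. Let u ∈ C³(Ω) with sup_{B_{2R}}(|u|+|∇u|) ≤ M; let C₁ ∈ [0,M] satisfy Δu + C₁ ≥ 1 and |∇²u| ≤ Δu + C₁ pointwise on B_{2R}; let q > 1, ρ ∈ (0,R/3], 0 < |h| < ρ, and let η be a smooth function supported in B_{R+2ρ} with 0 ≤ η ≤ 1, η ≡ 1 on B_{R+ρ}, |∇η| ≤ c₀/ρ and |∇²η| ≤ c₀/ρ². Set ṽ := v_h + C₁ and F[u]^{ij} := T_1(A_H[u])^{ij} = σ_1(A_H[u])δ^{ij} − (A_H[u])^{ij}. Then ∫_{B_{R+2ρ}} η (ṽ⁺)^{q−1} Σ_j (Σ_i ∂_i(F[u]^{ij})) ∂_j ṽ + Σ_{l=1}^n ∫_{B_{R+2ρ}}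 η (ṽ⁺)^{q−1} Σ_{i,j} F[u]^{ij} Δ_{ll}^h((H[u])_{ij}) ≥ −(C/ρ²)·( ∫_{B_{R+2ρ}}(ṽ⁺)^{q+2} + ∫_{B_{R+3ρ}}(Δu+C₁)^{q+2} ). -/

import Mathlib

open MeasureTheory Metric Set Matrix

noncomputable section

/-- The `k`-th elementary symmetric polynomial of the eigenvalues of an `n × n` real
matrix, defined via the coefficients of the characteristic polynomial. -/
def esymmMat {n : ℕ} (k : ℕ) (A : Matrix (Fin n) (Fin n) ℝ) : ℝ :=
  (-1 : ℝ) ^ k * A.charpoly.coeff (n - k)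

/-- `λ(A) ∈ Γ_k^+`, i.e. `σ_j(A) > 0` for all `1 ≤ j ≤ k`. -/
def GammaPlus {n : ℕ} (k : ℕ) (A : Matrix (Fin n) (Fin n) ℝ) : Prop :=
  ∀ j : ℕ, 1 ≤ j → j ≤ k → 0 < esymmMat j A

/-- The Newton tensors `T_0(A) = I`, `T_j(A) = σ_j(A) I - T_{j-1}(A) A`. -/
def newtonT {n : ℕ} : ℕ → Matrix (Fin n) (Fin n) ℝ → Matrix (Fin n) (Fin n) ℝ
  | 0, _ => 1
  | (j + 1), A => esymmMat (j + 1) A • (1 : Matrix (Fin n) (Fin n) ℝ) - newtonT j A * A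

/-- `i`-th partial derivative. -/
def pd {n : ℕ} (i : Fin n) (w : (Fin n → ℝ) → ℝ) (x : Fin n → ℝ) : ℝ :=
  fderiv ℝ w x (Pi.single i 1)

/-- Gradient as a vector. -/
def grad {n : ℕ} (w : (Fin n → ℝ) → ℝ) (x : Fin n → ℝ) : Fin n → ℝ :=
  fun i => pd i w x

/-- Hessian matrix. -/
def hess {n : ℕ} (w : (Fin n → ℝ) → ℝ) (x : Fin n → ℝ) : Matrix (Fin n) (Fin n) ℝ :=
  Matrix.of fun i j => pd i (pd j w) x

/-- Squared Euclidean norm of a vector. -/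
def normSq {n : ℕ} (ξ : Fin n → ℝ) : ℝ := ∑ i, ξ i ^ 2

/-- Euclidean norm of a vector. -/
def vnorm {n : ℕ} (ξ : Fin n → ℝ) : ℝ := Real.sqrt (∑ i, ξ i ^ 2)

/-- Operator norm of a matrix, viewed as a linear map between Euclidean spaces. -/
def matNorm {n : ℕ} (M : Matrix (Fin n) (Fin n) ℝ) : ℝ :=
  ‖LinearMap.toContinuousLinearMap (Matrix.toEuclideanLin M)‖

/-- Laplacian. -/
def lapl {n : ℕ} (w : (Fin n → ℝ) → ℝ) (x : Fin n → ℝ) : ℝ := ∑ l, pd l (pd l w) x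

/-- `W^{2,p}` norm (with classical derivatives) on a set. -/
def W2pNorm {n : ℕ} (p : ℝ) (w : (Fin n → ℝ) → ℝ) (B : Set (Fin n → ℝ)) : ℝ :=
  (∫ x in B, (|w x| ^ p + vnorm (grad w x) ^ p + matNorm (hess w x) ^ p)) ^ (1 / p)

/-- `C^{1,1}_loc` on a set: continuously differentiable with locally Lipschitz
first derivatives. -/
def C11On {E F : Type*} [NormedAddCommGroup E] [NormedSpace ℝ E]
    [NormedAddCommGroup F] [NormedSpace ℝ F] (f : E → F) (s : Set E) : Prop :=
  ContDiffOn ℝ 1 f s ∧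
    ∀ x ∈ s, ∃ (K : NNReal) (t : Set E), t ∈ nhdsWithin x s ∧
      LipschitzOnWith K (fderivWithin ℝ f s) t

/-- First order difference quotient `∇_l^h`. -/
def dq {n : ℕ} (l : Fin n) (h : ℝ) (w : (Fin n → ℝ) → ℝ) (x : Fin n → ℝ) : ℝ :=
  (w (x + h • (Pi.single l 1 : Fin n → ℝ)) - w x) / h

/-- Second order difference quotient `Δ_{ll}^h`. -/
def ddq {n : ℕ} (l : Fin n) (h : ℝ) (w : (Fin n → ℝ) → ℝ) (x : Fin n → ℝ) : ℝ :=
  (w (x + h • (Pi.single l 1 : Fin n → ℝ)) - 2 * w x + w (x - h • (Pi.single l 1 : Fin n → ℝ))) / h ^ 2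

/-- `L^s` seminorm (as an extended real number) of a function on a set. -/
def lpN {n : ℕ} (s : ℝ) (w : (Fin n → ℝ) → ℝ) (S : Set (Fin n → ℝ)) : ENNReal :=
  (∫⁻ x in S, ENNReal.ofReal (|w x| ^ s)) ^ (1 / s)

end

lemma newtonT_one_apply {n : ℕ} (hn : 3 ≤ n) (A : Matrix (Fin n) (Fin n) ℝ) (i j : Fin n) :
    newtonT 1 A i j = (∑ k, A k k) * (if i = j then 1 else 0) - A i j := by
  have : Nonempty (Fin n) := ⟨⟨0, by omega⟩⟩
  have h := Matrix.trace_eq_neg_charpoly_coeff A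
  have h2 : esymmMat 1 A = A.trace := by
    rw [h, esymmMat]; simp
  simp only [newtonT, Matrix.sub_apply, Matrix.smul_apply, Matrix.one_apply, one_mul, zero_add, h2,
    Matrix.trace, Matrix.diag, smul_eq_mul]

lemma abs_le_vnorm {n : ℕ} (v : Fin n → ℝ) (i : Fin n) : |v i| ≤ vnorm v := by
  apply Real.abs_le_sqrt
  exact Finset.single_le_sum (f := fun i => v i ^ 2) (fun i _ => sq_nonneg _) (Finset.mem_univ i)

lemma abs_entry_le_matNorm {n : ℕ} (A : Matrix (Fin n) (Fin n) ℝ) (i j : Fin n) :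
    |A i j| ≤ matNorm A := by
  have h := (LinearMap.toContinuousLinearMap (Matrix.toEuclideanLin A)).le_opNorm
    (EuclideanSpace.single j (1 : ℝ))
  have h2 := PiLp.norm_apply_le (p := 2) ((LinearMap.toContinuousLinearMap (Matrix.toEuclideanLin A))
    (EuclideanSpace.single j (1 : ℝ))) i
  simp only [EuclideanSpace.norm_single, norm_one, mul_one] at h
  refine le_trans (le_of_eq ?_) (h2.trans h)
  simp [Matrix.toEuclideanLin_apply]

lemma hasDerivAt_pospow (q : ℝ) (hq : 1 < q) (t : ℝ) :
    HasDerivAt (fun t : ℝ => (max t 0) ^ q) (q * (max t 0) ^ (q - 1)) t := by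
  rcases lt_trichotomy t 0 with h | h | h
  · have : (fun t : ℝ => (max t 0) ^ q) =ᶠ[nhds t] fun _ => 0 := by
      filter_upwards [Iio_mem_nhds h] with s hs
      rw [max_eq_right (le_of_lt hs), Real.zero_rpow (by linarith)]
    rw [max_eq_right h.le, Real.zero_rpow (by linarith), mul_zero]
    exact (hasDerivAt_const t (0 : ℝ)).congr_of_eventuallyEq this
  · subst h
    have h0 := Real.hasDerivAt_rpow_const (x := 0) (p := q) (Or.inr hq.le)
    simp only [max_self]
    rw [← hasDerivWithinAt_univ, ← Set.Iic_union_Ici (a := (0:ℝ))]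
    apply HasDerivWithinAt.union
    · have h1 : HasDerivWithinAt (fun _ : ℝ => (0:ℝ)) 0 (Iic 0) 0 := hasDerivWithinAt_const ..
      rw [Real.zero_rpow (by linarith), mul_zero]
      refine h1.congr (fun s hs => ?_) ?_
      · rw [max_eq_right hs, Real.zero_rpow (by linarith)]
      · rw [max_self, Real.zero_rpow (by linarith)]
    · refine h0.hasDerivWithinAt.congr (fun s hs => ?_) ?_
      · rw [max_eq_left hs]
      · rw [max_self]
  · have : (fun t : ℝ => (max t 0) ^ q) =ᶠ[nhds t] fun s => s ^ q := by
      filter_upwards [Ioi_mem_nhds h] with s hs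
      rw [max_eq_left (le_of_lt hs)]
    rw [max_eq_left h.le]
    exact (Real.hasDerivAt_rpow_const (Or.inr hq.le)).congr_of_eventuallyEq this

lemma contDiff_pospow (q : ℝ) (hq : 1 < q) : ContDiff ℝ 1 (fun t : ℝ => (max t 0) ^ q) := by
  rw [contDiff_one_iff_deriv]
  refine ⟨fun t => (hasDerivAt_pospow q hq t).differentiableAt, ?_⟩
  have : deriv (fun t : ℝ => (max t 0) ^ q) = fun t => q * (max t 0) ^ (q - 1) :=
    funext fun t => (hasDerivAt_pospow q hq t).deriv
  rw [this]
  exact continuous_const.mul ((continuous_id.max continuous_const).rpow_const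
    (fun _ => Or.inr (by linarith)))

lemma young1 {q a b c : ℝ} (hq : 1 < q) (ha : 0 ≤ a) (hb : 0 ≤ b) (hc : 0 ≤ c) :
    c ^ (q - 1) * a * b ^ 2 ≤ a ^ (q + 2) + b ^ (q + 2) + c ^ (q + 2) := by
  set m := max a (max b c) with hm
  have hma : a ≤ m := le_max_left _ _
  have hmb : b ≤ m := (le_max_left _ _).trans (le_max_right _ _)
  have hmc : c ≤ m := (le_max_right _ _).trans (le_max_right _ _)
  have hm0 : 0 ≤ m := ha.trans hma
  have h1 : c ^ (q - 1) * a * b ^ 2 ≤ m ^ (q - 1) * m * m ^ 2 := by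
    have := Real.rpow_le_rpow hc hmc (by linarith : 0 ≤ q - 1)
    gcongr
  have h2 : m ^ (q - 1) * m * m ^ 2 = m ^ (q + 2) := by
    rcases hm0.eq_or_lt with h | h
    · rw [← h, Real.zero_rpow (by linarith), Real.zero_rpow (by linarith)]; ring
    · rw [show q + 2 = (q - 1) + 1 + (2:ℕ) by push_cast; ring, Real.rpow_add h, Real.rpow_add h,
        Real.rpow_one, Real.rpow_natCast]
  have pa := Real.rpow_nonneg ha (q + 2)
  have pb := Real.rpow_nonneg hb (q + 2)
  have pc := Real.rpow_nonneg hc (q + 2)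
  rw [h2] at h1
  refine h1.trans ?_
  rcases max_choice a (max b c) with h | h
  · rw [hm, h]; linarith
  · rcases max_choice b c with h' | h'
    · rw [hm, h, h']; linarith
    · rw [hm, h, h']; linarith

/-- `c ^ q * b ^ 2` version. -/
lemma young2 {q b c : ℝ} (hq : 1 < q) (hb : 0 ≤ b) (hc : 0 ≤ c) :
    c ^ q * b ^ 2 ≤ 2 * (b ^ (q + 2) + c ^ (q + 2)) := by
  have h := young1 hq hc hb hc
  have h2 : c ^ (q - 1) * c = c ^ q := by
    rcases hc.eq_or_lt with h | h
    · rw [← h, Real.zero_rpow (by linarith), Real.zero_rpow (by linarith)]; ring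
    · rw [← Real.rpow_add_one h.ne']; ring_nf
  rw [h2] at h
  have pb := Real.rpow_nonneg hb (q + 2)
  linarith

/-! Derivatives -/

lemma pd_contDiffOn {n : ℕ} {O : Set (Fin n → ℝ)} (hO : IsOpen O) {w : (Fin n → ℝ) → ℝ} {m k : WithTop ℕ∞}
    (hw : ContDiffOn ℝ k w O) (hmk : m + 1 ≤ k) (i : Fin n) : ContDiffOn ℝ m (pd i w) O :=
  (hw.fderiv_of_isOpen hO hmk).clm_apply contDiffOn_const

lemma pd_congr {n : ℕ} {w w' : (Fin n → ℝ) → ℝ} {x : Fin n → ℝ} (h : w =ᶠ[nhds x] w') (i : Fin n) :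
    pd i w x = pd i w' x := by
  unfold pd; rw [h.fderiv_eq]

lemma pd_comm {n : ℕ} {O : Set (Fin n → ℝ)} (hO : IsOpen O) {w : (Fin n → ℝ) → ℝ}
    (hw : ContDiffOn ℝ 2 w O) {x : Fin n → ℝ} (hx : x ∈ O) (i j : Fin n) :
    pd i (pd j w) x = pd j (pd i w) x := by
  have hc : ContDiffAt ℝ 2 w x := hw.contDiffAt (hO.mem_nhds hx)
  have hd : DifferentiableAt ℝ (fderiv ℝ w) x :=
    (hc.fderiv_right (m := 1) (by norm_num)).differentiableAt (by norm_num)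
  have hs := (hc.isSymmSndFDerivAt (by simp)).eq (Pi.single i 1) (Pi.single j 1)
  have key : ∀ a b : Fin n, pd a (pd b w) x = fderiv ℝ (fderiv ℝ w) x (Pi.single a 1) (Pi.single b 1) := by
    intro a b
    have : HasFDerivAt (pd b w) ((fderiv ℝ (fderiv ℝ w) x).flip (Pi.single b 1)) x := by
      have := hd.hasFDerivAt.clm_apply (hasFDerivAt_const (Pi.single b (1:ℝ)) x)
      simp only [map_zero, ContinuousLinearMap.comp_zero, zero_add] at this
      exact this
    unfold pd
    rw [show (fun x => (fderiv ℝ w x) (Pi.single b 1)) = pd b w from rfl]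
    rw [this.fderiv]; rfl
  rw [key, key, hs]

lemma pd_comm13 {n : ℕ} {O : Set (Fin n → ℝ)} (hO : IsOpen O) {w : (Fin n → ℝ) → ℝ}
    (hw : ContDiffOn ℝ 3 w O) {x : Fin n → ℝ} (hx : x ∈ O) (i j k : Fin n) :
    pd i (pd j (pd k w)) x = pd j (pd i (pd k w)) x ∧
    pd i (pd j (pd k w)) x = pd i (pd k (pd j w)) x := by
  refine ⟨pd_comm hO (pd_contDiffOn hO hw (by norm_num) k) hx i j, pd_congr ?_ i⟩
  filter_upwards [hO.mem_nhds hx] with y hy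
  exact pd_comm hO (hw.of_le (by norm_num)) hy j k

lemma pd_mul {n : ℕ} {f g : (Fin n → ℝ) → ℝ} {x : Fin n → ℝ} (hf : DifferentiableAt ℝ f x)
    (hg : DifferentiableAt ℝ g x) (i : Fin n) :
    pd i (fun y => f y * g y) x = f x * pd i g x + g x * pd i f x := by
  unfold pd
  rw [fderiv_fun_mul hf hg]
  simp

lemma ibp {n : ℕ} {x₀ : Fin n → ℝ} {r r' : ℝ} (hrr : r < r')
    {η : (Fin n → ℝ) → ℝ} (hη : ContDiff ℝ 1 η) (hη0 : ∀ x, x ∉ ball x₀ r → η x = 0)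
    (hηn : ∀ x, 0 ≤ η x)
    {a : (Fin n → ℝ) → ℝ} {La : NNReal} (ha : LipschitzOnWith La a (ball x₀ r))
    {s : (Fin n → ℝ) → ℝ} (hs : ContDiffOn ℝ 1 s (ball x₀ r')) (j : Fin n) :
    ∫ x in ball x₀ r, a x * pd j (fun y => η y * s y) x =
      -∫ x in ball x₀ r, lineDeriv ℝ a x (Pi.single j 1) * (η x * s x) := by
  obtain ⟨f, hf, hfa⟩ := ha.extend_real
  set g : (Fin n → ℝ) → ℝ := fun y => η y * s y with hg
  have hg0 : ∀ x, x ∉ ball x₀ r → g x = 0 := fun x hx => by simp [hg, hη0 x hx]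
  have hgs : HasCompactSupport g := HasCompactSupport.intro (isCompact_closedBall x₀ r)
    (fun x hx => hg0 x (fun h => hx (ball_subset_closedBall h)))
  have hev : ∀ x, x ∉ ball x₀ r' → g =ᶠ[nhds x] fun _ => 0 := by
    intro x hx
    have : x ∈ (closedBall x₀ r)ᶜ := fun h => hx (closedBall_subset_ball hrr h)
    filter_upwards [isClosed_closedBall.isOpen_compl.mem_nhds this] with y hy
    exact hg0 y (fun h => hy (ball_subset_closedBall h))
  have hsat : ∀ x, x ∈ ball x₀ r' → ContDiffAt ℝ 1 s x := fun x hx =>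
    hs.contDiffAt (isOpen_ball.mem_nhds hx)
  have hgC : ContDiff ℝ 1 g := by
    rw [contDiff_iff_contDiffAt]
    intro x
    by_cases hx : x ∈ ball x₀ r'
    · exact hη.contDiffAt.mul (hsat x hx)
    · exact contDiffAt_const.congr_of_eventuallyEq (hev x hx)
  have hgf0 : ∀ x, x ∉ ball x₀ r → pd j g x = 0 := by
    intro x hx
    by_cases hx' : x ∈ ball x₀ r'
    · rw [hg, pd_mul (hη.differentiable (by norm_num) x) ((hsat x hx').differentiableAt (by norm_num))]
      have hmin : IsLocalMin η x := Filter.Eventually.of_forall (fun y => by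
        rw [hη0 x hx]; exact hηn y)
      rw [hη0 x hx, pd, pd, hmin.fderiv_eq_zero]
      simp
    · rw [pd_congr (hev x hx')]; simp [pd]
  obtain ⟨D, hD⟩ := ContDiff.lipschitzWith_of_hasCompactSupport hgs hgC (by norm_num)
  have key := hf.integral_lineDeriv_mul_eq (μ := volume) hD hgs (Pi.single j (1:ℝ))
  have e1 : ∀ x, lineDeriv ℝ g x (-Pi.single j (1:ℝ)) = - pd j g x := by
    intro x
    rw [(hgC.differentiable (by norm_num) x).lineDeriv_eq_fderiv, map_neg, pd]
  simp only [e1] at key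
  have e2 : ∫ x in ball x₀ r, a x * pd j g x = ∫ x, pd j g x * f x := by
    rw [← setIntegral_eq_integral_of_forall_compl_eq_zero (s := ball x₀ r)
      (f := fun x => pd j g x * f x) (fun x hx => by rw [hgf0 x hx, zero_mul])]
    apply setIntegral_congr_fun measurableSet_ball
    intro x hx
    simp only [hfa hx]; ring
  have e3 : ∫ x in ball x₀ r, lineDeriv ℝ a x (Pi.single j 1) * (η x * s x) =
      ∫ x, lineDeriv ℝ f x (Pi.single j 1) * g x := by
    rw [← setIntegral_eq_integral_of_forall_compl_eq_zero (s := ball x₀ r)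
      (f := fun x => lineDeriv ℝ f x (Pi.single j 1) * g x)
      (fun x hx => by rw [hg0 x hx, mul_zero])]
    apply setIntegral_congr_fun measurableSet_ball
    intro x hx
    have : a =ᶠ[nhds x] f := by
      filter_upwards [isOpen_ball.mem_nhds hx] with y hy using hfa hy
    simp only [this.lineDeriv_eq, hg]
  rw [e2, e3, key, ← integral_neg]
  congr 1; ext x; ring

lemma integrableOn_of_contOn {n : ℕ} {x₀ : Fin n → ℝ} {r r' : ℝ} (hrr : r < r')
    {f : (Fin n → ℝ) → ℝ} (hf : ContinuousOn f (ball x₀ r')) : IntegrableOn f (ball x₀ r) :=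
  ((hf.mono (closedBall_subset_ball hrr)).integrableOn_compact (isCompact_closedBall _ _)).mono_set
    ball_subset_closedBall

lemma ibp_bound {n : ℕ} {x₀ : Fin n → ℝ} {r r' : ℝ} (hrr : r < r')
    {η : (Fin n → ℝ) → ℝ} (hη : ContDiff ℝ 1 η) (hη0 : ∀ x, x ∉ ball x₀ r → η x = 0)
    (hηn : ∀ x, 0 ≤ η x ∧ η x ≤ 1) {c : ℝ}
    {a : (Fin n → ℝ) → ℝ} {La : NNReal} (ha : LipschitzOnWith La a (ball x₀ r))
    (hac : ContinuousOn a (ball x₀ r'))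
    {v g w : (Fin n → ℝ) → ℝ} (hv : ContDiffOn ℝ 1 v (ball x₀ r'))
    (hg : ContDiffOn ℝ 1 g (ball x₀ r')) (hw : ContinuousOn w (ball x₀ r'))
    {q : ℝ} (hq : 1 < q) (j : Fin n) (hc : ∀ x, |pd j η x| ≤ c) {L N : ℝ}
    (hw1 : ∀ x ∈ ball x₀ r, 1 ≤ w x)
    (haL : ∀ x ∈ ball x₀ r, |a x| ≤ L)
    (haL' : ∀ x ∈ ball x₀ r, |lineDeriv ℝ a x (Pi.single j 1)| ≤ L * w x)
    (hgN : ∀ x ∈ ball x₀ r, |g x| ≤ N * w x) :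
    -(L * N * (c + 1)) * ∫ x in ball x₀ r, (max (v x) 0) ^ q * w x ^ 2 ≤
    ∫ x in ball x₀ r, (q * (η x * (max (v x) 0) ^ (q - 1) * (a x * g x * pd j v x)) +
      η x * (max (v x) 0) ^ q * (a x * pd j g x)) := by
  set s : (Fin n → ℝ) → ℝ := fun x => g x * (max (v x) 0) ^ q with hs
  have hp : ContDiffOn ℝ 1 (fun x => (max (v x) 0) ^ q) (ball x₀ r') :=
    (contDiff_pospow q hq).comp_contDiffOn hv
  have hsC : ContDiffOn ℝ 1 s (ball x₀ r') := hg.mul hp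
  have hat : ∀ {f : (Fin n → ℝ) → ℝ}, ContDiffOn ℝ 1 f (ball x₀ r') → ∀ x ∈ ball x₀ r',
      DifferentiableAt ℝ f x := fun hf x hx =>
    (hf.contDiffAt (isOpen_ball.mem_nhds hx)).differentiableAt (by norm_num)
  have hpd : ∀ {f : (Fin n → ℝ) → ℝ}, ContDiffOn ℝ 1 f (ball x₀ r') →
      ContinuousOn (pd j f) (ball x₀ r') := fun hf =>
    (pd_contDiffOn (m := 0) isOpen_ball hf (by norm_num) j).continuousOn
  have hphi : ContinuousOn (fun x => (max (v x) 0) ^ q) (ball x₀ r') := hp.continuousOn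
  have hηc := hη.continuous.continuousOn (s := ball x₀ r')
  have hηp : ContinuousOn (pd j η) (ball x₀ r') := hpd hη.contDiffOn
  have id1 : ∀ x ∈ ball x₀ r, (q * (η x * (max (v x) 0) ^ (q - 1) * (a x * g x * pd j v x)) +
      η x * (max (v x) 0) ^ q * (a x * pd j g x)) =
      a x * pd j (fun y => η y * s y) x - a x * pd j η x * s x := by
    intro x hx
    have hx' := ball_subset_ball hrr.le hx
    have hpv : pd j (fun x => (max (v x) 0) ^ q) x = q * (max (v x) 0) ^ (q - 1) * pd j v x := by
      have := (hasDerivAt_pospow q hq (v x)).comp_hasFDerivAt x (hat hv x hx').hasFDerivAt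
      unfold pd
      rw [show (fun x => (max (v x) 0) ^ q) = (fun t : ℝ => (max t 0) ^ q) ∘ v from rfl, this.fderiv]
      simp
    rw [pd_mul (hη.differentiable (by norm_num) x) (hat hsC x hx'), hs,
      pd_mul (hat hg x hx') (hat hp x hx'), hpv]
    ring
  rw [setIntegral_congr_fun measurableSet_ball id1]
  have hηsC : ContDiffOn ℝ 1 (fun y => η y * s y) (ball x₀ r') := hη.contDiffOn.mul hsC
  have i1 : IntegrableOn (fun x => a x * pd j (fun y => η y * s y) x) (ball x₀ r) :=
    integrableOn_of_contOn hrr (hac.mul (hpd hηsC))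
  have i2 : IntegrableOn (fun x => a x * pd j η x * s x) (ball x₀ r) :=
    integrableOn_of_contOn hrr ((hac.mul hηp).mul hsC.continuousOn)
  rw [integral_sub i1 i2,
    ibp hrr hη hη0 (fun x => (hηn x).1) ha hsC j]
  have hint : IntegrableOn (fun x => (max (v x) 0) ^ q * w x ^ 2) (ball x₀ r) :=
    integrableOn_of_contOn hrr (hphi.mul (hw.pow 2))
  have b0 : ∀ x ∈ ball x₀ r, |s x| ≤ N * w x * (max (v x) 0) ^ q := by
    intro x hx
    have : 0 ≤ (max (v x) 0) ^ q := Real.rpow_nonneg (le_max_right _ _) _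
    rw [hs, abs_mul, abs_of_nonneg this]
    exact mul_le_mul_of_nonneg_right (hgN x hx) this
  have b1 : |∫ x in ball x₀ r, lineDeriv ℝ a x (Pi.single j 1) * (η x * s x)| ≤
      L * N * ∫ x in ball x₀ r, (max (v x) 0) ^ q * w x ^ 2 := by
    rw [← integral_const_mul]
    refine norm_integral_le_of_norm_le (f := fun x => lineDeriv ℝ a x (Pi.single j 1) * (η x * s x))
      (hint.const_mul _) ?_
    refine (ae_restrict_iff' measurableSet_ball).2 (Filter.Eventually.of_forall fun x hx => ?_)
    rw [Real.norm_eq_abs, abs_mul, abs_mul, abs_of_nonneg (hηn x).1]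
    have h1 := haL' x hx
    have h2 := b0 x hx
    have h3 : η x * |s x| ≤ N * w x * (max (v x) 0) ^ q :=
      (mul_le_of_le_one_left (abs_nonneg _) (hηn x).2).trans h2
    calc _ ≤ (L * w x) * (N * w x * (max (v x) 0) ^ q) :=
          mul_le_mul h1 h3 (mul_nonneg (hηn x).1 (abs_nonneg _)) ((abs_nonneg _).trans h1)
      _ = _ := by ring
  have b2 : |∫ x in ball x₀ r, a x * pd j η x * s x| ≤
      L * N * c * ∫ x in ball x₀ r, (max (v x) 0) ^ q * w x ^ 2 := by
    rw [← integral_const_mul]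
    refine norm_integral_le_of_norm_le (f := fun x => a x * pd j η x * s x)
      (hint.const_mul _) ?_
    refine (ae_restrict_iff' measurableSet_ball).2 (Filter.Eventually.of_forall fun x hx => ?_)
    rw [Real.norm_eq_abs, abs_mul, abs_mul]
    have h1 := haL x hx
    have h2 := b0 x hx
    have h4 := hc x
    have hL : 0 ≤ L := (abs_nonneg _).trans h1
    have hc0 : 0 ≤ c := (abs_nonneg _).trans h4
    have hw := hw1 x hx
    have hNw : 0 ≤ N * w x := (abs_nonneg _).trans (hgN x hx)
    have hP : 0 ≤ (max (v x) 0) ^ q := Real.rpow_nonneg (le_max_right _ _) _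
    calc _ ≤ (L * c) * (N * w x * (max (v x) 0) ^ q) :=
          mul_le_mul (mul_le_mul h1 h4 (abs_nonneg _) hL) h2 (abs_nonneg _) (mul_nonneg hL hc0)
      _ ≤ (L * c) * (N * w x * (max (v x) 0) ^ q) * w x :=
          le_mul_of_one_le_right (mul_nonneg (mul_nonneg hL hc0) (mul_nonneg hNw hP)) hw
      _ = _ := by ring
  have := (abs_le.1 b1).2
  have := (abs_le.1 b2).2
  linarith

/-- Bounded and Lipschitz on a set. -/
def BL {E : Type*} [NormedAddCommGroup E] (K : Set E) (G : E → ℝ) : Prop :=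
  ∃ L : ℝ, 0 ≤ L ∧ ∀ y ∈ K, |G y| ≤ L ∧ ∀ y' ∈ K, |G y - G y'| ≤ L * ‖y - y'‖

namespace BL
variable {E : Type*} [NormedAddCommGroup E] {K : Set E} {G G' : E → ℝ}

lemma const (c : ℝ) : BL K (fun _ => c) :=
  ⟨|c|, abs_nonneg _, fun y _ => ⟨le_rfl, fun y' _ => by simp; positivity⟩⟩

lemma add (h : BL K G) (h' : BL K G') : BL K (fun y => G y + G' y) := by
  obtain ⟨L, hL, h⟩ := h
  obtain ⟨L', hL', h'⟩ := h'
  refine ⟨L + L', by positivity, fun y hy => ⟨(abs_add_le _ _).trans (add_le_add (h y hy).1 (h' y hy).1),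
    fun y' hy' => ?_⟩⟩
  have e : G y + G' y - (G y' + G' y') = (G y - G y') + (G' y - G' y') := by ring
  rw [e, add_mul]
  exact (abs_add_le _ _).trans (add_le_add ((h y hy).2 y' hy') ((h' y hy).2 y' hy'))

lemma mul (h : BL K G) (h' : BL K G') : BL K (fun y => G y * G' y) := by
  obtain ⟨L, hL, h⟩ := h
  obtain ⟨L', hL', h'⟩ := h'
  refine ⟨2 * (L * L') , by positivity, fun y hy => ⟨?_, fun y' hy' => ?_⟩⟩
  · rw [abs_mul]
    have := mul_le_mul (h y hy).1 (h' y hy).1 (abs_nonneg _) hL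
    nlinarith [mul_nonneg hL hL']
  · have e : G y * G' y - (G y' * G' y') = G y * (G' y - G' y') + (G y - G y') * G' y' := by ring
    rw [e]
    refine (abs_add_le _ _).trans ?_
    rw [abs_mul, abs_mul]
    have h1 := mul_le_mul (h y hy).1 ((h' y hy).2 y' hy') (abs_nonneg _) hL
    have h2 := mul_le_mul ((h y hy).2 y' hy') (h' y' hy').1 (abs_nonneg _)
      (mul_nonneg hL (norm_nonneg _))
    nlinarith

lemma neg (h : BL K G) : BL K (fun y => - G y) := by
  simpa using (const (K := K) (-1)).mul h

lemma sub (h : BL K G) (h' : BL K G') : BL K (fun y => G y - G' y) := by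
  simpa [sub_eq_add_neg] using h.add h'.neg

lemma sum {ι : Type*} (s : Finset ι) {G : ι → E → ℝ} (h : ∀ i ∈ s, BL K (G i)) :
    BL K (fun y => ∑ i ∈ s, G i y) := by
  classical
  induction s using Finset.induction_on with
  | empty => simpa using const (K := K) 0
  | insert a s ha ih =>
    simp only [Finset.sum_insert ha]
    exact (h a (Finset.mem_insert_self a s)).add (ih fun i hi => h i (Finset.mem_insert_of_mem hi))

end BL

lemma C11On.data {E : Type*} [NormedAddCommGroup E] [NormedSpace ℝ E] {U K : Set E} {f : E → ℝ}
    (hf : C11On f U) (hU : IsOpen U) (hK : IsCompact K) (hKc : Convex ℝ K) (hKU : K ⊆ U) :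
    ∃ L : ℝ, 1 ≤ L ∧ ∀ y ∈ K, |f y| ≤ L ∧ ‖fderiv ℝ f y‖ ≤ L ∧ ∀ y' ∈ K,
      ‖fderiv ℝ f y - fderiv ℝ f y'‖ ≤ L * ‖y - y'‖ ∧ |f y - f y'| ≤ L * ‖y - y'‖ := by
  obtain ⟨hf1, hf2⟩ := hf
  have hll : LocallyLipschitzOn U (fderivWithin ℝ f U) := fun x hx => hf2 x hx
  obtain ⟨C, hC⟩ := (hll.mono hKU).exists_lipschitzOnWith_of_compact hK
  obtain ⟨B1, hB1⟩ := hK.exists_bound_of_continuousOn (hf1.continuousOn.mono hKU)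
  have hcd : ContinuousOn (fderiv ℝ f) K :=
    (hf1.continuousOn_fderiv_of_isOpen hU (by norm_num)).mono hKU
  obtain ⟨B2, hB2⟩ := hK.exists_bound_of_continuousOn hcd
  have hd : ∀ y ∈ K, DifferentiableAt ℝ f y := fun y hy =>
    (hf1.contDiffAt (hU.mem_nhds (hKU hy))).differentiableAt (by norm_num)
  set L := max 1 (max (C:ℝ) (max B1 B2)) with hL
  have l1 : 1 ≤ L := le_max_left _ _
  have l2 : (C:ℝ) ≤ L := (le_max_left _ _).trans (le_max_right _ _)
  have l3 : B1 ≤ L := (le_max_left _ _).trans ((le_max_right _ _).trans (le_max_right _ _))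
  have l4 : B2 ≤ L := (le_max_right _ _).trans ((le_max_right _ _).trans (le_max_right _ _))
  refine ⟨L, l1, fun y hy => ⟨(hB1 y hy).trans l3, (hB2 y hy).trans l4, fun y' hy' => ⟨?_, ?_⟩⟩⟩
  · have := hC.norm_sub_le hy hy'
    rw [fderivWithin_of_isOpen hU (hKU hy), fderivWithin_of_isOpen hU (hKU hy')] at this
    exact this.trans (mul_le_mul_of_nonneg_right l2 (norm_nonneg _))
  · exact hKc.norm_image_sub_le_of_norm_fderiv_le hd (fun z hz => (hB2 z hz).trans l4) hy' hy

lemma taylor2 {E : Type*} [NormedAddCommGroup E] [NormedSpace ℝ E] {K : Set E} {f : E → ℝ} {L : ℝ}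
    (hKc : Convex ℝ K) (hL : 0 ≤ L) (hd : ∀ y ∈ K, DifferentiableAt ℝ f y)
    (hLip : ∀ y ∈ K, ∀ y' ∈ K, ‖fderiv ℝ f y - fderiv ℝ f y'‖ ≤ L * ‖y - y'‖)
    {y z : E} (hy : y ∈ K) (hz : z ∈ K) :
    |f z - f y - fderiv ℝ f y (z - y)| ≤ L * ‖z - y‖ ^ 2 := by
  have hseg : segment ℝ y z ⊆ K := hKc.segment_subset hy hz
  have := (convex_segment y z).norm_image_sub_le_of_norm_fderiv_le' (f := f) (φ := fderiv ℝ f y)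
    (C := L * ‖z - y‖) (fun t ht => hd t (hseg ht)) (fun t ht => ?_) (left_mem_segment ℝ y z)
    (right_mem_segment ℝ y z)
  · rw [Real.norm_eq_abs] at this
    calc _ ≤ _ := this
      _ = _ := by ring
  · refine (hLip t (hseg ht) y hy).trans (mul_le_mul_of_nonneg_left ?_ hL)
    rw [← dist_eq_norm, ← dist_eq_norm, dist_comm z y, dist_comm t y]
    have := mem_segment_iff_wbtw.1 ht
    exact this.dist_add_dist ▸ le_add_of_nonneg_right dist_nonneg

lemma taylor_sym {E : Type*} [NormedAddCommGroup E] [NormedSpace ℝ E] {K : Set E} {f : E → ℝ} {L : ℝ}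
    (hKc : Convex ℝ K) (hL : 0 ≤ L) (hd : ∀ y ∈ K, DifferentiableAt ℝ f y)
    (hLip : ∀ y ∈ K, ∀ y' ∈ K, ‖fderiv ℝ f y - fderiv ℝ f y'‖ ≤ L * ‖y - y'‖)
    {y z z' : E} (hy : y ∈ K) (hz : z ∈ K) (hz' : z' ∈ K) :
    |f z - 2 * f y + f z' - fderiv ℝ f y (z - (2 : ℝ) • y + z')| ≤
      L * (‖z - y‖ ^ 2 + ‖z' - y‖ ^ 2) := by
  have h1 := taylor2 hKc hL hd hLip hy hz
  have h2 := taylor2 hKc hL hd hLip hy hz'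
  have e : f z - 2 * f y + f z' - fderiv ℝ f y (z - (2 : ℝ) • y + z') =
      (f z - f y - fderiv ℝ f y (z - y)) + (f z' - f y - fderiv ℝ f y (z' - y)) := by
    simp only [map_add, map_sub, map_smul, smul_eq_mul]; ring
  rw [e, mul_add]
  exact (abs_add_le _ _).trans (add_le_add h1 h2)

lemma shift_mem {n : ℕ} {x₀ x : Fin n → ℝ} {r r' h t : ℝ} (hx : x ∈ closedBall x₀ r) (l : Fin n)
    (hr : r + |h| < r') (ht : t ∈ Icc (0:ℝ) 1) :
    x + (t * h) • (Pi.single l 1 : Fin n → ℝ) ∈ ball x₀ r' := by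
  have h1 : dist x x₀ ≤ r := hx
  rw [dist_eq_norm] at h1
  rw [mem_ball, dist_eq_norm]
  have h2 : ‖(t * h) • (Pi.single l 1 : Fin n → ℝ)‖ ≤ |h| := by
    rw [norm_smul, Pi.norm_single, norm_one, mul_one, Real.norm_eq_abs, abs_mul, abs_of_nonneg ht.1]
    exact mul_le_of_le_one_left (abs_nonneg _) ht.2
  have e : x + (t * h) • (Pi.single l 1 : Fin n → ℝ) - x₀ =
    (x - x₀) + (t * h) • (Pi.single l 1 : Fin n → ℝ) := by abel
  rw [e]
  exact (norm_add_le _ _).trans_lt (by linarith)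

/-- Average of `w` over a segment. -/
noncomputable def segAvg {n : ℕ} (w : (Fin n → ℝ) → ℝ) (l : Fin n) (h : ℝ) (x : Fin n → ℝ) : ℝ :=
  ∫ t in Icc (0:ℝ) 1, w (x + (t * h) • (Pi.single l 1 : Fin n → ℝ))

lemma seg_cont {n : ℕ} {x₀ x : Fin n → ℝ} {r r' h : ℝ} (hx : x ∈ closedBall x₀ r) (l : Fin n)
    (hr : r + |h| < r') {w : (Fin n → ℝ) → ℝ} (hw : ContinuousOn w (ball x₀ r')) :
    ContinuousOn (fun t : ℝ => w (x + (t * h) • (Pi.single l 1 : Fin n → ℝ))) (Icc 0 1) :=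
  hw.comp (by fun_prop) (fun _ ht => shift_mem hx l hr ht)

lemma segAvg_mono {n : ℕ} {x₀ x : Fin n → ℝ} {r r' h : ℝ} (hx : x ∈ closedBall x₀ r) (l : Fin n)
    (hr : r + |h| < r') {w w' : (Fin n → ℝ) → ℝ} (hw : ContinuousOn w (ball x₀ r'))
    (hw' : ContinuousOn w' (ball x₀ r')) (hle : ∀ y ∈ ball x₀ r', w y ≤ w' y) :
    segAvg w l h x ≤ segAvg w' l h x := by
  apply setIntegral_mono_on ((seg_cont hx l hr hw).integrableOn_compact isCompact_Icc)
    ((seg_cont hx l hr hw').integrableOn_compact isCompact_Icc) measurableSet_Icc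
  intro t ht
  exact hle _ (shift_mem hx l hr ht)

lemma segAvg_const {n : ℕ} {x : Fin n → ℝ} (c : ℝ) (l : Fin n) (h : ℝ) :
    segAvg (fun _ => c) l h x = c := by
  simp [segAvg]

lemma segAvg_jensen {n : ℕ} {x₀ x : Fin n → ℝ} {r r' h : ℝ} (hx : x ∈ closedBall x₀ r) (l : Fin n)
    (hr : r + |h| < r') {w : (Fin n → ℝ) → ℝ} (hw : ContinuousOn w (ball x₀ r'))
    (hw0 : ∀ y ∈ ball x₀ r', 0 ≤ w y) {p : ℝ} (hp : 1 ≤ p) :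
    segAvg w l h x ^ p ≤ segAvg (fun y => w y ^ p) l h x := by
  have : IsProbabilityMeasure (volume.restrict (Icc (0:ℝ) 1)) := ⟨by simp⟩
  have hc := seg_cont hx l hr hw
  have := (convexOn_rpow hp).map_integral_le (μ := volume.restrict (Icc (0:ℝ) 1))
    (f := fun t : ℝ => w (x + (t * h) • (Pi.single l 1 : Fin n → ℝ)))
    (continuousOn_id.rpow_const (fun _ _ => Or.inr (by linarith))) isClosed_Ici
    ((ae_restrict_iff' measurableSet_Icc).2 (Filter.Eventually.of_forall fun t ht =>
      hw0 _ (shift_mem hx l hr ht)))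
    (hc.integrableOn_compact isCompact_Icc)
    ((hc.rpow_const (fun _ _ => Or.inr (by linarith))).integrableOn_compact isCompact_Icc)
  exact this

lemma segAvg_fubini {n : ℕ} {x₀ : Fin n → ℝ} {r r' h : ℝ} (l : Fin n)
    (hr : r + |h| < r') {w : (Fin n → ℝ) → ℝ} (hw : ContinuousOn w (ball x₀ r'))
    (hwi : IntegrableOn w (ball x₀ r')) (hw0 : ∀ y ∈ ball x₀ r', 0 ≤ w y) :
    IntegrableOn (segAvg w l h) (ball x₀ r) ∧
    ∫ x in ball x₀ r, segAvg w l h x ≤ ∫ x in ball x₀ r', w x := by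
  set F : (Fin n → ℝ) × ℝ → ℝ := fun z => w (z.1 + (z.2 * h) • (Pi.single l 1 : Fin n → ℝ)) with hF
  have hcont : ContinuousOn F (closedBall x₀ r ×ˢ Icc 0 1) :=
    hw.comp (by fun_prop) (fun z hz => shift_mem hz.1 l hr hz.2)
  have hint : Integrable F ((volume.restrict (ball x₀ r)).prod (volume.restrict (Icc (0:ℝ) 1))) := by
    rw [Measure.prod_restrict, ← Measure.volume_eq_prod]
    exact (hcont.integrableOn_compact ((isCompact_closedBall _ _).prod isCompact_Icc)).mono_set
      (prod_mono ball_subset_closedBall le_rfl)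
  refine ⟨hint.integral_prod_left, ?_⟩
  have hs := integral_integral_swap (f := fun x t => F (x, t)) hint
  have e : ∫ x in ball x₀ r, segAvg w l h x = ∫ x in ball x₀ r, ∫ t in Icc (0:ℝ) 1, F (x, t) := rfl
  rw [e, hs]
  have hb : ∀ t ∈ Icc (0:ℝ) 1, ∫ x in ball x₀ r, F (x, t) ≤ ∫ x in ball x₀ r', w x := by
    intro t ht
    set c := (t * h) • (Pi.single l 1 : Fin n → ℝ) with hc
    have h1 := (measurePreserving_add_right (volume : Measure (Fin n → ℝ)) c).setIntegral_preimage_emb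
      (measurableEmbedding_addRight c) w (ball (x₀ + c) r)
    have h2 : (fun x => x + c) ⁻¹' ball (x₀ + c) r = ball x₀ r := by
      ext x; simp [mem_ball]
    rw [h2] at h1
    change ∫ x in ball x₀ r, w (x + c) ≤ _
    rw [h1]
    apply setIntegral_mono_set hwi
    · exact (ae_restrict_iff' measurableSet_ball).2 (Filter.Eventually.of_forall fun x hx => hw0 x hx)
    · refine (HasSubset.Subset.eventuallyLE ?_)
      intro y hy
      have : y - c ∈ closedBall x₀ r := by
        rw [mem_closedBall, dist_eq_norm]
        rw [mem_ball, dist_eq_norm] at hy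
        rw [show y - c - x₀ = y - (x₀ + c) by abel]
        exact hy.le
      have := shift_mem this l hr ht
      rwa [← hc, sub_add_cancel] at this
  have hi2 : IntegrableOn (fun t => ∫ x in ball x₀ r, F (x, t)) (Icc (0:ℝ) 1) := hint.integral_prod_right
  calc ∫ t in Icc (0:ℝ) 1, ∫ x in ball x₀ r, F (x, t)
      ≤ ∫ t in Icc (0:ℝ) 1, ∫ x in ball x₀ r', w x :=
        setIntegral_mono_on hi2 (by simp) measurableSet_Icc hb
    _ = _ := by simp

lemma increment_le {n : ℕ} {x₀ x : Fin n → ℝ} {r r' h : ℝ} (hx : x ∈ closedBall x₀ r) (l : Fin n)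
    (hr : r + |h| < r') {f w : (Fin n → ℝ) → ℝ} (hw : ContinuousOn w (ball x₀ r'))
    (hf : ContDiffOn ℝ 1 f (ball x₀ r')) (hfw : ∀ y ∈ ball x₀ r', |pd l f y| ≤ w y) :
    |f (x + h • (Pi.single l 1 : Fin n → ℝ)) - f x| ≤ |h| * segAvg w l h x := by
  have hpd : ContinuousOn (pd l f) (ball x₀ r') :=
    (pd_contDiffOn (m := 0) isOpen_ball hf (by norm_num) l).continuousOn
  have hderiv : ∀ t ∈ uIcc (0:ℝ) 1, HasDerivAt
      (fun t : ℝ => f (x + (t * h) • (Pi.single l 1 : Fin n → ℝ)))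
      (h * pd l f (x + (t * h) • (Pi.single l 1 : Fin n → ℝ))) t := by
    intro t ht
    rw [uIcc_of_le zero_le_one] at ht
    have h1 : HasFDerivAt f (fderiv ℝ f (x + (t * h) • (Pi.single l 1 : Fin n → ℝ)))
        (x + (t * h) • (Pi.single l 1 : Fin n → ℝ)) :=
      ((hf.contDiffAt (isOpen_ball.mem_nhds (shift_mem hx l hr ht))).differentiableAt
        (by norm_num)).hasFDerivAt
    have h2 : HasDerivAt (fun t : ℝ => x + (t * h) • (Pi.single l 1 : Fin n → ℝ))
        (h • (Pi.single l 1 : Fin n → ℝ)) t := by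
      have := (((hasDerivAt_id t).mul_const h).smul_const (Pi.single l 1 : Fin n → ℝ)).const_add x
      simpa using this
    have := h1.comp_hasDerivAt t h2
    rw [map_smul, smul_eq_mul] at this
    exact this
  have hc : ContinuousOn (fun t : ℝ => h * pd l f (x + (t * h) • (Pi.single l 1 : Fin n → ℝ)))
      (Icc 0 1) := continuousOn_const.mul (seg_cont hx l hr hpd)
  have key := intervalIntegral.integral_eq_sub_of_hasDerivAt hderiv
    (by rw [← uIcc_of_le (zero_le_one' ℝ)] at hc; exact hc.intervalIntegrable)
  simp only [one_mul, zero_mul, zero_smul, add_zero] at key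
  rw [← key, intervalIntegral.integral_of_le zero_le_one, ← integral_Icc_eq_integral_Ioc]
  rw [segAvg, ← integral_const_mul]
  refine norm_integral_le_of_norm_le
    (f := fun t : ℝ => h * pd l f (x + (t * h) • (Pi.single l 1 : Fin n → ℝ)))
    (((seg_cont hx l hr hw).integrableOn_compact isCompact_Icc).const_mul _) ?_
  refine (ae_restrict_iff' measurableSet_Icc).2 (Filter.Eventually.of_forall fun t ht => ?_)
  rw [Real.norm_eq_abs, abs_mul]
  exact mul_le_mul_of_nonneg_left (hfw _ (shift_mem hx l hr ht)) (abs_nonneg _)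

/-- One-jet of `u`. -/
noncomputable def jet {n : ℕ} (u : (Fin n → ℝ) → ℝ) (x : Fin n → ℝ) :
    (Fin n → ℝ) × ℝ × (Fin n → ℝ) := (x, u x, grad u x)

/-- The compact set in which the jets live. -/
def jetK {n : ℕ} (x₀ : Fin n → ℝ) (r M : ℝ) : Set ((Fin n → ℝ) × ℝ × (Fin n → ℝ)) :=
  closedBall x₀ r ×ˢ (Icc (-M) M ×ˢ closedBall 0 M)

lemma jetK_compact {n : ℕ} (x₀ : Fin n → ℝ) (r M : ℝ) : IsCompact (jetK x₀ r M) :=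
  (isCompact_closedBall _ _).prod (isCompact_Icc.prod (isCompact_closedBall _ _))

lemma jetK_convex {n : ℕ} (x₀ : Fin n → ℝ) (r M : ℝ) : Convex ℝ (jetK x₀ r M) :=
  (convex_closedBall _ _).prod ((convex_Icc _ _).prod (convex_closedBall _ _))

lemma vnorm_nonneg {n : ℕ} (v : Fin n → ℝ) : 0 ≤ vnorm v := Real.sqrt_nonneg _

lemma jet_mem {n : ℕ} {u : (Fin n → ℝ) → ℝ} {x₀ x : Fin n → ℝ} {r M : ℝ} (hM : 0 < M)
    (hx : x ∈ ball x₀ r) (hu : |u x| + vnorm (grad u x) ≤ M) : jet u x ∈ jetK x₀ r M := by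
  have h0 := vnorm_nonneg (grad u x)
  refine ⟨ball_subset_closedBall hx, ?_, ?_⟩
  · rw [mem_Icc, ← abs_le]; simp only [jet]; linarith
  · rw [mem_closedBall, dist_zero_right, pi_norm_le_iff_of_nonneg hM.le]
    intro i
    have := abs_le_vnorm (grad u x) i
    have := abs_nonneg (u x)
    simp only [jet, Real.norm_eq_abs]; linarith

lemma jet_contDiffOn {n : ℕ} {u : (Fin n → ℝ) → ℝ} {O : Set (Fin n → ℝ)} (hO : IsOpen O)
    (hu : ContDiffOn ℝ 3 u O) : ContDiffOn ℝ 2 (jet u) O := by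
  refine contDiffOn_id.prodMk ((hu.of_le (by norm_num)).prodMk ?_)
  rw [contDiffOn_pi]
  intro i
  exact pd_contDiffOn hO hu (by norm_num) i

lemma jet_fderiv {n : ℕ} {u : (Fin n → ℝ) → ℝ} {O : Set (Fin n → ℝ)} (hO : IsOpen O)
    (hu : ContDiffOn ℝ 3 u O) {x : Fin n → ℝ} (hx : x ∈ O) (m : Fin n) :
    fderiv ℝ (jet u) x (Pi.single m 1) = (Pi.single m 1, pd m u x, fun k => pd m (pd k u) x) := by
  have h1 : HasFDerivAt u (fderiv ℝ u x) x :=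
    ((hu.contDiffAt (hO.mem_nhds hx)).differentiableAt (by norm_num)).hasFDerivAt
  have h2 : ∀ k, HasFDerivAt (pd k u) (fderiv ℝ (pd k u) x) x := fun k =>
    (((pd_contDiffOn (m := 1) hO hu (by norm_num) k).contDiffAt (hO.mem_nhds hx)).differentiableAt
      (by norm_num)).hasFDerivAt
  have h3 : HasFDerivAt (grad u) (ContinuousLinearMap.pi fun k => fderiv ℝ (pd k u) x) x :=
    hasFDerivAt_pi.2 h2
  have := (hasFDerivAt_id x).prodMk (h1.prodMk h3)
  rw [show jet u = fun x => (id x, u x, grad u x) from rfl, this.fderiv]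
  rfl

lemma lineDeriv_jet_bound {n : ℕ} {u : (Fin n → ℝ) → ℝ} {O : Set (Fin n → ℝ)} (hO : IsOpen O)
    (hu : ContDiffOn ℝ 3 u O) {x : Fin n → ℝ} (hx : x ∈ O) (m : Fin n)
    {K : Set ((Fin n → ℝ) × ℝ × (Fin n → ℝ))} (hK : ∀ y ∈ O, jet u y ∈ K)
    {G : (Fin n → ℝ) × ℝ × (Fin n → ℝ) → ℝ} {L B : ℝ} (hL : 0 ≤ L)
    (hG : ∀ y ∈ K, ∀ y' ∈ K, |G y - G y'| ≤ L * ‖y - y'‖)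
    (hB : ‖fderiv ℝ (jet u) x (Pi.single m 1)‖ ≤ B) :
    |lineDeriv ℝ (fun y => G (jet u y)) x (Pi.single m 1)| ≤ L * B := by
  set e : Fin n → ℝ := Pi.single m 1
  by_cases hd : LineDifferentiableAt ℝ (fun y => G (jet u y)) x e
  swap
  · rw [lineDeriv_zero_of_not_lineDifferentiableAt hd, abs_zero]
    exact mul_nonneg hL ((norm_nonneg _).trans hB)
  have h1 : HasDerivAt (fun t : ℝ => G (jet u (x + t • e)))
    (lineDeriv ℝ (fun y => G (jet u y)) x e) 0 := hd.hasLineDerivAt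
  have h2 : HasDerivAt (fun t : ℝ => jet u (x + t • e)) (fderiv ℝ (jet u) x e) 0 := by
    have : DifferentiableAt ℝ (jet u) x :=
      ((jet_contDiffOn hO hu).contDiffAt (hO.mem_nhds hx)).differentiableAt (by norm_num)
    exact this.hasFDerivAt.hasLineDerivAt e
  have t1 := (hasDerivAt_iff_tendsto_slope.1 h1).norm
  have t2 := ((hasDerivAt_iff_tendsto_slope.1 h2).norm).const_mul L
  have hmem : ∀ᶠ t : ℝ in nhds 0, x + t • e ∈ O := by
    have hc : ContinuousAt (fun t : ℝ => x + t • e) 0 := by fun_prop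
    apply hc.eventually_mem
    simpa using hO.mem_nhds hx
  refine (le_of_tendsto_of_tendsto t1 t2 ?_).trans (mul_le_mul_of_nonneg_left hB hL)
  filter_upwards [hmem.filter_mono nhdsWithin_le_nhds] with t ht
  rw [slope_def_module, slope_def_module, norm_smul, norm_smul]
  have := hG _ (hK _ ht) _ (hK x hx)
  simp only [zero_smul, add_zero, Real.norm_eq_abs]
  rw [Real.norm_eq_abs] at *
  calc _ ≤ |(t - 0)⁻¹| * (L * ‖jet u (x + t • e) - jet u x‖) :=
        mul_le_mul_of_nonneg_left this (abs_nonneg _)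
    _ = _ := by ring

lemma jet_comp_lipschitz {n : ℕ} {u : (Fin n → ℝ) → ℝ} {x₀ : Fin n → ℝ} {r r' : ℝ} (hrr : r < r')
    (hu : ContDiffOn ℝ 3 u (ball x₀ r'))
    {K : Set ((Fin n → ℝ) × ℝ × (Fin n → ℝ))} (hK : ∀ y ∈ ball x₀ r', jet u y ∈ K)
    {G : (Fin n → ℝ) × ℝ × (Fin n → ℝ) → ℝ} {L : ℝ} (hL : 0 ≤ L)
    (hG : ∀ y ∈ K, ∀ y' ∈ K, |G y - G y'| ≤ L * ‖y - y'‖) :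
    (∃ La : NNReal, LipschitzOnWith La (fun x => G (jet u x)) (ball x₀ r)) ∧
    ContinuousOn (fun x => G (jet u x)) (ball x₀ r') := by
  have hGL : LipschitzOnWith (Real.toNNReal L) G K := by
    apply LipschitzOnWith.of_dist_le_mul
    intro y hy y' hy'
    rw [Real.dist_eq, dist_eq_norm, Real.coe_toNNReal L hL]
    exact hG y hy y' hy'
  have hj := jet_contDiffOn isOpen_ball hu
  constructor
  · have hj' : ContDiffOn ℝ 1 (jet u) (closedBall x₀ r) :=
      (hj.of_le (by norm_num)).mono (closedBall_subset_ball hrr)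
    obtain ⟨C, hC⟩ := hj'.exists_lipschitzOnWith (by norm_num) (convex_closedBall _ _)
      (isCompact_closedBall _ _)
    exact ⟨_, hGL.comp (hC.mono ball_subset_closedBall)
      (fun y hy => hK y (ball_subset_ball hrr.le hy))⟩
  · exact hGL.continuousOn.comp hj.continuousOn (fun y hy => hK y hy)

/-- `ξ_k`-derivative of `H_ij`. -/
noncomputable def cP {n : ℕ} (H : ((Fin n → ℝ) × ℝ × (Fin n → ℝ)) → Matrix (Fin n) (Fin n) ℝ)
    (i j k : Fin n) (y : (Fin n → ℝ) × ℝ × (Fin n → ℝ)) : ℝ :=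
  fderiv ℝ (fun y => H y i j) y (0, 0, Pi.single k 1)

/-- `z`-derivative of `H_ij`. -/
noncomputable def cZ {n : ℕ} (H : ((Fin n → ℝ) × ℝ × (Fin n → ℝ)) → Matrix (Fin n) (Fin n) ℝ)
    (i j : Fin n) (y : (Fin n → ℝ) × ℝ × (Fin n → ℝ)) : ℝ :=
  fderiv ℝ (fun y => H y i j) y (0, 1, 0)

/-- `x_m`-derivative of `H_ij`. -/
noncomputable def cX {n : ℕ} (H : ((Fin n → ℝ) × ℝ × (Fin n → ℝ)) → Matrix (Fin n) (Fin n) ℝ)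
    (i j m : Fin n) (y : (Fin n → ℝ) × ℝ × (Fin n → ℝ)) : ℝ :=
  fderiv ℝ (fun y => H y i j) y (Pi.single m 1, 0, 0)

/-- lower order coefficients. -/
noncomputable def cG {n : ℕ} (H : ((Fin n → ℝ) × ℝ × (Fin n → ℝ)) → Matrix (Fin n) (Fin n) ℝ)
    (m : Fin n) (y : (Fin n → ℝ) × ℝ × (Fin n → ℝ)) : ℝ :=
  ∑ i, ((cX H i m i y + y.2.2 i * cZ H i m y) - (cX H i i m y + y.2.2 m * cZ H i i y)
    + ∑ k, (H y i k * cP H i k m y - H y k k * cP H i i m y))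

lemma clm_decomp {n : ℕ} (ℓ : ((Fin n → ℝ) × ℝ × (Fin n → ℝ)) →L[ℝ] ℝ) (a : Fin n → ℝ) (z : ℝ)
    (ξ : Fin n → ℝ) :
    ℓ (a, z, ξ) = ℓ (a, 0, 0) + z * ℓ (0, 1, 0) + ∑ k, ξ k * ℓ (0, 0, Pi.single k 1) := by
  have h1 : (a, z, ξ) = (a, (0:ℝ), (0 : Fin n → ℝ)) + z • ((0 : Fin n → ℝ), (1:ℝ), (0 : Fin n → ℝ)) +
      ∑ k, ξ k • ((0 : Fin n → ℝ), (0:ℝ), (Pi.single k 1 : Fin n → ℝ)) := by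
    ext i
    · simp [Prod.fst_sum]
    · simp [Prod.snd_sum, Prod.fst_sum]
    · simp [Prod.snd_sum, Finset.sum_apply, Pi.single_apply]
  rw [h1, map_add, map_add, map_sum, map_smul]
  simp only [map_smul, smul_eq_mul]

lemma pd_H {n : ℕ} {u : (Fin n → ℝ) → ℝ} {O : Set (Fin n → ℝ)} (hO : IsOpen O)
    (hu : ContDiffOn ℝ 3 u O) {x : Fin n → ℝ} (hx : x ∈ O)
    (H : ((Fin n → ℝ) × ℝ × (Fin n → ℝ)) → Matrix (Fin n) (Fin n) ℝ) (i j m : Fin n)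
    (hd : DifferentiableAt ℝ (fun y => H y i j) (jet u x)) :
    pd m (fun y => H (y, u y, grad u y) i j) x =
      cX H i j m (jet u x) + pd m u x * cZ H i j (jet u x)
        + ∑ k, pd m (pd k u) x * cP H i j k (jet u x) := by
  have h1 : DifferentiableAt ℝ (jet u) x :=
    ((jet_contDiffOn hO hu).contDiffAt (hO.mem_nhds hx)).differentiableAt (by norm_num)
  have h2 := hd.hasFDerivAt.comp x h1.hasFDerivAt
  have h3 : pd m (fun y => H (y, u y, grad u y) i j) x =
    (fderiv ℝ (fun y => H y i j) (jet u x)) (fderiv ℝ (jet u) x (Pi.single m 1)) := by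
    unfold pd
    rw [show (fun y => H (y, u y, grad u y) i j) = (fun y => H y i j) ∘ jet u from rfl, h2.fderiv]
    rfl
  rw [h3, jet_fderiv hO hu hx, clm_decomp]
  rfl

lemma pd_newton {n : ℕ} (hn : 3 ≤ n) {u : (Fin n → ℝ) → ℝ} {O : Set (Fin n → ℝ)} (hO : IsOpen O)
    (hu : ContDiffOn ℝ 3 u O) {x : Fin n → ℝ} (hx : x ∈ O)
    (A : Fin n → Fin n → (Fin n → ℝ) → ℝ) (Hu : (Fin n → ℝ) → Matrix (Fin n) (Fin n) ℝ)
    (hA : ∀ i j y, Hu y i j = A i j y)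
    (hd : ∀ i j, DifferentiableAt ℝ (A i j) x) (j : Fin n) :
    ∑ i, pd i (fun y => newtonT 1 (hess u y - Hu y) i j) x =
      ∑ i, (pd i (A i j) x - pd j (A i i) x) := by
  have hd2 : ∀ a b, DifferentiableAt ℝ (pd a (pd b u)) x := fun a b =>
    ((pd_contDiffOn (m := 1) hO (pd_contDiffOn (m := 2) hO hu (by norm_num) b) (by norm_num) a
      ).contDiffAt (hO.mem_nhds hx)).differentiableAt (by norm_num)
  have h1 : ∀ i, pd i (fun y => newtonT 1 (hess u y - Hu y) i j) x =
      (∑ k, (pd i (pd k (pd k u)) x - pd i (A k k) x)) * (if i = j then 1 else 0) -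
        (pd i (pd i (pd j u)) x - pd i (A i j) x) := by
    intro i
    have e : (fun y => newtonT 1 (hess u y - Hu y) i j) = fun y =>
        (∑ k, (pd k (pd k u) y - A k k y)) * (if i = j then 1 else 0) -
          (pd i (pd j u) y - A i j y) := by
      funext y
      rw [newtonT_one_apply hn]
      simp [hess, hA]
    rw [e]
    have hs : HasFDerivAt (fun y => (∑ k, (pd k (pd k u) y - A k k y)) * (if i = j then 1 else 0) -
          (pd i (pd j u) y - A i j y))
        ((if i = j then (1:ℝ) else 0) • (∑ k, (fderiv ℝ (pd k (pd k u)) x - fderiv ℝ (A k k) x)) -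
          (fderiv ℝ (pd i (pd j u)) x - fderiv ℝ (A i j) x)) x := by
      refine HasFDerivAt.fun_sub (HasFDerivAt.mul_const ?_ _)
        ((hd2 i j).hasFDerivAt.fun_sub (hd i j).hasFDerivAt)
      exact HasFDerivAt.fun_sum fun k _ => (hd2 k k).hasFDerivAt.fun_sub (hd k k).hasFDerivAt
    rw [show ∀ f, pd i f x = fderiv ℝ f x (Pi.single i 1) from fun _ => rfl, hs.fderiv]
    simp only [_root_.sub_apply, _root_.smul_apply,
      _root_.sum_apply, smul_eq_mul, pd]
    ring
  simp only [h1, Finset.sum_sub_distrib, mul_ite, mul_one, mul_zero, Finset.sum_ite_eq',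
    Finset.mem_univ, if_true]
  have h3 : ∀ k, pd j (pd k (pd k u)) x = pd k (pd k (pd j u)) x := fun k => by
    rw [(pd_comm13 hO hu hx j k k).1, (pd_comm13 hO hu hx k j k).2]
  simp only [h3]
  ring

lemma alg1 {n : ℕ} (P : Fin n → Fin n → Fin n → ℝ) (Z : Fin n → Fin n → ℝ)
    (X : Fin n → Fin n → Fin n → ℝ) (U Hm : Fin n → Fin n → ℝ) (ξ v : Fin n → ℝ) :
    (∑ j, (∑ i, ((X i j i + ξ i * Z i j + ∑ k, U i k * P i j k) -
        (X i i j + ξ j * Z i i + ∑ k, U j k * P i i k))) * v j) +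
      ∑ i, ∑ j, ((∑ k, (U k k - Hm k k)) * (if i = j then 1 else 0) - (U i j - Hm i j)) *
        ∑ m, P i j m * v m =
    ∑ m, ((∑ i, ∑ k, (P i m k * U i k + (-P i i k) * U m k + P i i m * U k k + (-P i k m) * U i k)) +
      ∑ i, ((X i m i + ξ i * Z i m) - (X i i m + ξ m * Z i i)
    + ∑ k, (Hm i k * P i k m - Hm k k * P i i m))) * v m := by
  have e1 : ∑ i, ∑ j, ((∑ k, (U k k - Hm k k)) * (if i = j then 1 else 0) - (U i j - Hm i j)) *
        ∑ m, P i j m * v m = ∑ m, (∑ i, ∑ k, ((U k k - Hm k k) * P i i m -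
          (U i k - Hm i k) * P i k m)) * v m := by
    have sw : ∀ F : Fin n → Fin n → ℝ, ∑ i, ∑ j, F i j * ∑ m, P i j m * v m =
        ∑ m, (∑ i, ∑ j, F i j * P i j m) * v m := by
      intro F
      simp only [Finset.mul_sum, Finset.sum_mul]
      conv_rhs => rw [Finset.sum_comm]
      refine Finset.sum_congr rfl fun i _ => ?_
      conv_rhs => rw [Finset.sum_comm]
      refine Finset.sum_congr rfl fun j _ => Finset.sum_congr rfl fun m _ => ?_
      ring
    rw [sw]
    refine Finset.sum_congr rfl fun m _ => ?_
    congr 1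
    refine Finset.sum_congr rfl fun i _ => ?_
    generalize ht : ∑ k, (U k k - Hm k k) = tr
    rw [Finset.sum_sub_distrib, ← Finset.sum_mul, ht]
    have e2 : ∀ k, (tr * (if i = k then 1 else 0) - (U i k - Hm i k)) * P i k m =
        (if i = k then tr * P i k m else 0) - (U i k - Hm i k) * P i k m := by
      intro k; split_ifs <;> ring
    simp only [e2, Finset.sum_sub_distrib, Finset.sum_ite_eq, Finset.mem_univ, if_true]
  rw [e1, ← Finset.sum_add_distrib]
  refine Finset.sum_congr rfl fun m _ => ?_
  rw [← add_mul, ← Finset.sum_add_distrib, ← Finset.sum_add_distrib]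
  congr 1
  refine Finset.sum_congr rfl fun i _ => ?_
  simp only [Finset.sum_add_distrib, Finset.sum_sub_distrib, sub_mul, add_mul, neg_mul,
    Finset.sum_neg_distrib]
  simp only [mul_comm (U _ _)]
  ring

lemma alg2 {n : ℕ} (P T : Fin n → Fin n → Fin n → ℝ) (h12 : ∀ i j k, T i j k = T j i k)
    (h23 : ∀ i j k, T i j k = T i k j) :
    ∑ m, ∑ i, ∑ k, (P i m k * T m i k + (-P i i k) * T m m k + P i i m * T m k k +
      (-P i k m) * T m i k) = 0 := by
  simp only [Finset.sum_add_distrib, neg_mul, Finset.sum_neg_distrib]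
  have a1 : ∑ m, ∑ i, ∑ k, P i k m * T m i k = ∑ m, ∑ i, ∑ k, P i m k * T m i k := by
    rw [Finset.sum_comm]
    conv_rhs => rw [Finset.sum_comm]
    refine Finset.sum_congr rfl fun i _ => ?_
    rw [Finset.sum_comm]
    refine Finset.sum_congr rfl fun m _ => Finset.sum_congr rfl fun k _ => ?_
    rw [h23 k i m, h12 k m i, h23 m k i]
  have a2 : ∑ m, ∑ i, ∑ k, P i i m * T m k k = ∑ m, ∑ i, ∑ k, P i i k * T m m k := by
    rw [Finset.sum_comm]
    conv_rhs => rw [Finset.sum_comm]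
    refine Finset.sum_congr rfl fun i _ => ?_
    rw [Finset.sum_comm]
    refine Finset.sum_congr rfl fun m _ => Finset.sum_congr rfl fun k _ => ?_
    rw [h12 k m m, h23 m k m]
  rw [a1, a2]; ring

lemma shift_mem' {n : ℕ} {x₀ x : Fin n → ℝ} {r r' h : ℝ} (hx : x ∈ closedBall x₀ r) (l : Fin n)
    (hr : r + |h| < r') :
    x + h • (Pi.single l 1 : Fin n → ℝ) ∈ ball x₀ r' ∧
    x - h • (Pi.single l 1 : Fin n → ℝ) ∈ ball x₀ r' := by
  constructor
  · simpa using shift_mem (t := 1) hx l hr (by simp)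
  · have := shift_mem (t := 1) (h := -h) hx l (by simpa using hr) (by simp)
    simpa [sub_eq_add_neg] using this

lemma mem_closedBall_dist_self {n : ℕ} {x₀ x : Fin n → ℝ} {r : ℝ} (hx : x ∈ ball x₀ r) :
    x ∈ closedBall x₀ (dist x x₀) ∧ dist x x₀ < r := ⟨le_refl (dist x x₀), hx⟩

lemma shift_mem'' {n : ℕ} {x₀ x : Fin n → ℝ} {r r' h : ℝ} (hx : x ∈ ball x₀ r) (l : Fin n)
    (hr : r + |h| ≤ r') :
    x + h • (Pi.single l 1 : Fin n → ℝ) ∈ ball x₀ r' ∧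
    x - h • (Pi.single l 1 : Fin n → ℝ) ∈ ball x₀ r' :=
  shift_mem' (mem_closedBall_dist_self hx).1 l (by have := (mem_closedBall_dist_self hx).2; linarith)

lemma ddq_contDiffOn {n : ℕ} {x₀ : Fin n → ℝ} {r r' h : ℝ} (l : Fin n) (hr : r + |h| ≤ r')
    {f : (Fin n → ℝ) → ℝ} {k : WithTop ℕ∞} (hf : ContDiffOn ℝ k f (ball x₀ r')) :
    ContDiffOn ℝ k (ddq l h f) (ball x₀ r) := by
  have hm : MapsTo (fun x => x) (ball x₀ r) (ball x₀ r') :=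
    ball_subset_ball (by have := abs_nonneg h; linarith)
  have h1 : ContDiffOn ℝ k (fun x => f (x + h • (Pi.single l 1 : Fin n → ℝ))) (ball x₀ r) :=
    hf.comp (contDiffOn_id.add contDiffOn_const) (fun x hx => (shift_mem'' hx l hr).1)
  have h2 : ContDiffOn ℝ k (fun x => f (x - h • (Pi.single l 1 : Fin n → ℝ))) (ball x₀ r) :=
    hf.comp (contDiffOn_id.sub contDiffOn_const) (fun x hx => (shift_mem'' hx l hr).2)
  have h0 : ContDiffOn ℝ k f (ball x₀ r) := hf.mono hm
  exact ((h1.sub (contDiffOn_const.mul h0)).add h2).div_const _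

lemma ddq_continuousOn {n : ℕ} {x₀ : Fin n → ℝ} {r r' h : ℝ} (l : Fin n) (hr : r + |h| ≤ r')
    {f : (Fin n → ℝ) → ℝ} (hf : ContinuousOn f (ball x₀ r')) :
    ContinuousOn (ddq l h f) (ball x₀ r) :=
  (ddq_contDiffOn (k := 0) l hr (contDiffOn_zero.2 hf)).continuousOn

lemma pd_ddq {n : ℕ} {x₀ x : Fin n → ℝ} {r r' h : ℝ} (hx : x ∈ ball x₀ r) (hr : r + |h| ≤ r')
    {f : (Fin n → ℝ) → ℝ} (hf : ContDiffOn ℝ 1 f (ball x₀ r')) (k : Fin n) (C₁ : ℝ) :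
    pd k (fun y => (∑ l, ddq l h f y) + C₁) x = ∑ l, ddq l h (pd k f) x := by
  have hd : ∀ y ∈ ball x₀ r', HasFDerivAt f (fderiv ℝ f y) y := fun y hy =>
    ((hf.contDiffAt (isOpen_ball.mem_nhds hy)).differentiableAt (by norm_num)).hasFDerivAt
  have hx' : x ∈ ball x₀ r' := ball_subset_ball (by have := abs_nonneg h; linarith) hx
  have key : ∀ l, HasFDerivAt (ddq l h f) ((h ^ 2)⁻¹ •
      (fderiv ℝ f (x + h • (Pi.single l 1 : Fin n → ℝ)) - (2:ℝ) • fderiv ℝ f x +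
        fderiv ℝ f (x - h • (Pi.single l 1 : Fin n → ℝ)))) x := by
    intro l
    have h1 := (hd _ (shift_mem'' hx l hr).1).comp x
      ((hasFDerivAt_id x).add_const (h • (Pi.single l 1 : Fin n → ℝ)))
    have h2 := (hd _ (shift_mem'' hx l hr).2).comp x
      ((hasFDerivAt_id x).sub_const (h • (Pi.single l 1 : Fin n → ℝ)))
    have h3 := ((h1.fun_sub ((hd x hx').const_mul 2)).fun_add h2).const_mul ((h ^ 2)⁻¹)
    have e : ddq l h f = fun y => (h ^ 2)⁻¹ * (f (y + h • (Pi.single l 1 : Fin n → ℝ)) - 2 * f y +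
        f (y - h • (Pi.single l 1 : Fin n → ℝ))) := by
      funext y; simp only [ddq]; ring
    rw [e]
    exact h3
  have hs := (HasFDerivAt.fun_sum fun l (_ : l ∈ Finset.univ) => key l).add_const C₁
  rw [show ∀ f, pd k f x = fderiv ℝ f x (Pi.single k 1) from fun _ => rfl, hs.fderiv]
  rw [_root_.sum_apply]
  refine Finset.sum_congr rfl fun l _ => ?_
  simp only [_root_.smul_apply, _root_.add_apply, _root_.sub_apply, smul_eq_mul, ddq, pd]
  ring

lemma one_le_segAvg {n : ℕ} {x₀ x : Fin n → ℝ} {r r' h : ℝ} (hx : x ∈ closedBall x₀ r) (l : Fin n)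
    (hr : r + |h| < r') {w : (Fin n → ℝ) → ℝ} (hw : ContinuousOn w (ball x₀ r'))
    (hw1 : ∀ y ∈ ball x₀ r', 1 ≤ w y) : 1 ≤ segAvg w l h x := by
  have := segAvg_mono hx l hr (w := fun _ => 1) continuousOn_const hw hw1
  rwa [segAvg_const] at this

lemma jet_increment {n : ℕ} {x₀ x : Fin n → ℝ} {r r' h : ℝ} (hx : x ∈ closedBall x₀ r) (l : Fin n)
    (hr : r + |h| < r') {u w : (Fin n → ℝ) → ℝ} {M : ℝ} (hM : 0 < M)
    (hu : ContDiffOn ℝ 3 u (ball x₀ r'))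
    (hw : ContinuousOn w (ball x₀ r')) (hw1 : ∀ y ∈ ball x₀ r', 1 ≤ w y)
    (hu1 : ∀ y ∈ ball x₀ r', ∀ i, |pd i u y| ≤ M)
    (hu2 : ∀ y ∈ ball x₀ r', ∀ i j, |pd i (pd j u) y| ≤ w y) :
    ‖jet u (x + h • (Pi.single l 1 : Fin n → ℝ)) - jet u x‖ ≤ |h| * ((1 + M) * segAvg w l h x) := by
  have hW : ContinuousOn (fun y => (1 + M) * w y) (ball x₀ r') := continuousOn_const.mul hw
  have e : segAvg (fun y => (1 + M) * w y) l h x = (1 + M) * segAvg w l h x := by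
    simp only [segAvg, integral_const_mul]
  have h1 := increment_le hx l hr hW (hu.of_le (by norm_num)) (fun y hy => by
    have := hu1 y hy l; have := hw1 y hy; nlinarith)
  have h2 := fun k => increment_le hx l hr hW (pd_contDiffOn (m := 1) isOpen_ball hu (by norm_num) k)
    (fun y hy => by
      have := hu2 y hy l k; have := hw1 y hy; nlinarith)
  rw [e] at h1
  simp only [e] at h2
  have h3 := one_le_segAvg hx l hr hw hw1
  have h0 : 0 ≤ |h| * ((1 + M) * segAvg w l h x) := by positivity
  have h4 : |h| ≤ |h| * ((1 + M) * segAvg w l h x) :=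
    le_mul_of_one_le_right (abs_nonneg _) (by nlinarith)
  refine norm_prod_le_iff.2 ⟨?_, norm_prod_le_iff.2 ⟨h1, (pi_norm_le_iff_of_nonneg h0).2 fun k => h2 k⟩⟩
  simp only [jet, Prod.mk_sub_mk, add_sub_cancel_left, norm_smul, Pi.norm_single, norm_one, mul_one]
  exact h4

lemma ddq_H_bound {n : ℕ} {x₀ x : Fin n → ℝ} {r r' h : ℝ} (hx : x ∈ closedBall x₀ r) (l : Fin n)
    (hr : r + |h| < r') (hh : h ≠ 0) {u w : (Fin n → ℝ) → ℝ} {M : ℝ} (hM : 0 < M)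
    (hu : ContDiffOn ℝ 3 u (ball x₀ r'))
    (hw : ContinuousOn w (ball x₀ r')) (hw1 : ∀ y ∈ ball x₀ r', 1 ≤ w y)
    (hu1 : ∀ y ∈ ball x₀ r', ∀ i, |pd i u y| ≤ M)
    (hu2 : ∀ y ∈ ball x₀ r', ∀ i j, |pd i (pd j u) y| ≤ w y)
    {K : Set ((Fin n → ℝ) × ℝ × (Fin n → ℝ))} (hK : ∀ y ∈ ball x₀ r', jet u y ∈ K)
    (hKc : Convex ℝ K)
    {f : (Fin n → ℝ) × ℝ × (Fin n → ℝ) → ℝ} {L : ℝ} (hL : 0 ≤ L)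
    (hd : ∀ y ∈ K, DifferentiableAt ℝ f y)
    (hLip : ∀ y ∈ K, ∀ y' ∈ K, ‖fderiv ℝ f y - fderiv ℝ f y'‖ ≤ L * ‖y - y'‖) :
    |ddq l h (fun y => f (jet u y)) x - (fderiv ℝ f (jet u x) (0, 1, 0) * ddq l h u x +
      ∑ k, fderiv ℝ f (jet u x) (0, 0, Pi.single k 1) * ddq l h (pd k u) x)| ≤
      L * (1 + M) ^ 2 * (segAvg w l h x ^ 2 + segAvg w l (-h) x ^ 2) := by
  have hxr : x ∈ ball x₀ r' := closedBall_subset_ball (by have := abs_nonneg h; linarith) hx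
  have hs := shift_mem' hx l hr
  have ht := taylor_sym hKc hL hd hLip (hK x hxr) (hK _ hs.1) (hK _ hs.2)
  have j1 := jet_increment hx l hr hM hu hw hw1 hu1 hu2
  have j2 := jet_increment (h := -h) hx l (by simpa using hr) hM hu hw hw1 hu1 hu2
  rw [neg_smul, ← sub_eq_add_neg, abs_neg] at j2
  have hv : jet u (x + h • (Pi.single l 1 : Fin n → ℝ)) - (2:ℝ) • jet u x +
      jet u (x - h • (Pi.single l 1 : Fin n → ℝ)) =
      (0, h ^ 2 * ddq l h u x, fun k => h ^ 2 * ddq l h (pd k u) x) := by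
    ext i
    · simp [jet]; ring
    · simp [jet, ddq]; field_simp
    · simp [jet, ddq, grad]; field_simp
  rw [hv, clm_decomp] at ht
  have hz : fderiv ℝ f (jet u x) ((0 : Fin n → ℝ), (0:ℝ), (0 : Fin n → ℝ)) = 0 := map_zero _
  rw [hz, zero_add] at ht
  have hh2 : 0 < h ^ 2 := by positivity
  have e : ddq l h (fun y => f (jet u y)) x - (fderiv ℝ f (jet u x) (0, 1, 0) * ddq l h u x +
      ∑ k, fderiv ℝ f (jet u x) (0, 0, Pi.single k 1) * ddq l h (pd k u) x) =
      (f (jet u (x + h • Pi.single l 1)) - 2 * f (jet u x) + f (jet u (x - h • Pi.single l 1)) -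
      (h ^ 2 * ddq l h u x * (fderiv ℝ f (jet u x)) (0, 1, 0) +
        ∑ k, h ^ 2 * ddq l h (pd k u) x * (fderiv ℝ f (jet u x)) (0, 0, Pi.single k 1))) / h ^ 2 := by
    have e0 : (h ^ 2 * ddq l h u x * (fderiv ℝ f (jet u x)) (0, 1, 0) +
        ∑ k, h ^ 2 * ddq l h (pd k u) x * (fderiv ℝ f (jet u x)) (0, 0, Pi.single k 1)) =
        h ^ 2 * (fderiv ℝ f (jet u x) (0, 1, 0) * ddq l h u x +
        ∑ k, fderiv ℝ f (jet u x) (0, 0, Pi.single k 1) * ddq l h (pd k u) x) := by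
      rw [mul_add, Finset.mul_sum]
      congr 1
      · ring
      · exact Finset.sum_congr rfl fun k _ => by ring
    rw [e0, sub_div, mul_div_cancel_left₀ _ hh2.ne']
    rfl
  rw [e, abs_div, abs_of_pos hh2, div_le_iff₀ hh2]
  refine ht.trans ?_
  have k1 := pow_le_pow_left₀ (norm_nonneg _) j1 2
  have k2 := pow_le_pow_left₀ (norm_nonneg _) j2 2
  rw [mul_pow, sq_abs] at k1 k2
  calc _ ≤ L * (h ^ 2 * ((1 + M) * segAvg w l h x) ^ 2 + h ^ 2 * ((1 + M) * segAvg w l (-h) x) ^ 2) :=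
        mul_le_mul_of_nonneg_left (add_le_add k1 k2) hL
    _ = _ := by ring

lemma norm_basis_le {n : ℕ} (k : Fin n) :
    ‖((0 : Fin n → ℝ), (0:ℝ), (Pi.single k 1 : Fin n → ℝ))‖ ≤ 1 ∧
    ‖((0 : Fin n → ℝ), (1:ℝ), (0 : Fin n → ℝ))‖ ≤ 1 ∧
    ‖((Pi.single k 1 : Fin n → ℝ), (0:ℝ), (0 : Fin n → ℝ))‖ ≤ 1 := by
  simp [Prod.norm_def, Pi.norm_single]

lemma BL_fderiv {n : ℕ} {K : Set ((Fin n → ℝ) × ℝ × (Fin n → ℝ))}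
    {f : ((Fin n → ℝ) × ℝ × (Fin n → ℝ)) → ℝ} {L : ℝ} (hL : 1 ≤ L)
    (h : ∀ y ∈ K, |f y| ≤ L ∧ ‖fderiv ℝ f y‖ ≤ L ∧ ∀ y' ∈ K,
      ‖fderiv ℝ f y - fderiv ℝ f y'‖ ≤ L * ‖y - y'‖ ∧ |f y - f y'| ≤ L * ‖y - y'‖)
    (e : (Fin n → ℝ) × ℝ × (Fin n → ℝ)) (he : ‖e‖ ≤ 1) :
    ∀ y ∈ K, |fderiv ℝ f y e| ≤ L ∧ ∀ y' ∈ K, |fderiv ℝ f y e - fderiv ℝ f y' e| ≤ L * ‖y - y'‖ := by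
  have key : ∀ (ℓ : ((Fin n → ℝ) × ℝ × (Fin n → ℝ)) →L[ℝ] ℝ), |ℓ e| ≤ ‖ℓ‖ := fun ℓ => by
    have := ℓ.le_opNorm e
    rw [Real.norm_eq_abs] at this
    exact this.trans (mul_le_of_le_one_right (norm_nonneg _) he)
  intro y hy
  refine ⟨(key _).trans (h y hy).2.1, fun y' hy' => ?_⟩
  have := key (fderiv ℝ f y - fderiv ℝ f y')
  exact this.trans ((h y hy).2.2 y' hy').1

lemma consts {n : ℕ} {Ω : Set (Fin n → ℝ)} (hΩ : IsOpen Ω)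
    (H : ((Fin n → ℝ) × ℝ × (Fin n → ℝ)) → Matrix (Fin n) (Fin n) ℝ)
    (hH : ∀ i j : Fin n,
      C11On (fun y => H y i j) (Ω ×ˢ ((univ : Set ℝ) ×ˢ (univ : Set (Fin n → ℝ)))))
    {x₀ : Fin n → ℝ} {r M : ℝ} (hM : 0 < M) (hball : closedBall x₀ r ⊆ Ω) :
    ∃ L : ℝ, 1 ≤ L ∧ ∀ y ∈ jetK x₀ r M,
      (∀ i j, DifferentiableAt ℝ (fun y => H y i j) y ∧ |H y i j| ≤ L ∧ |cZ H i j y| ≤ L ∧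
        ∀ y' ∈ jetK x₀ r M, |H y i j - H y' i j| ≤ L * ‖y - y'‖ ∧
        ‖fderiv ℝ (fun y => H y i j) y - fderiv ℝ (fun y => H y i j) y'‖ ≤ L * ‖y - y'‖) ∧
      (∀ i j k, |cP H i j k y| ≤ L ∧ ∀ y' ∈ jetK x₀ r M, |cP H i j k y - cP H i j k y'| ≤ L * ‖y - y'‖) ∧
      (∀ m, |cG H m y| ≤ L ∧ ∀ y' ∈ jetK x₀ r M, |cG H m y - cG H m y'| ≤ L * ‖y - y'‖) := by
  set K := jetK x₀ r M with hKdef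
  have hU : IsOpen (Ω ×ˢ ((univ : Set ℝ) ×ˢ (univ : Set (Fin n → ℝ)))) :=
    hΩ.prod (isOpen_univ.prod isOpen_univ)
  have hKU : K ⊆ Ω ×ˢ ((univ : Set ℝ) ×ˢ (univ : Set (Fin n → ℝ))) := fun y hy =>
    ⟨hball hy.1, mem_univ _, mem_univ _⟩
  choose LH hLH1 hLH using fun i j => (hH i j).data hU (jetK_compact x₀ r M) (jetK_convex x₀ r M) hKU
  have bl1 : ∀ i j, BL K (fun y => H y i j) := fun i j =>
    ⟨LH i j, by linarith [hLH1 i j], fun y hy => ⟨(hLH i j y hy).1, fun y' hy' => ((hLH i j y hy).2.2 y' hy').2⟩⟩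
  have bl2 : ∀ i j (e : (Fin n → ℝ) × ℝ × (Fin n → ℝ)), ‖e‖ ≤ 1 →
      BL K (fun y => fderiv ℝ (fun y => H y i j) y e) := fun i j e he =>
    ⟨LH i j, by linarith [hLH1 i j], BL_fderiv (hLH1 i j) (hLH i j) e he⟩
  have bl3 : ∀ m : Fin n, BL K (fun y => y.2.2 m) := fun m => by
    refine ⟨1 + M, by linarith, fun y hy => ⟨?_, fun y' _ => ?_⟩⟩
    · have h1 : ‖y.2.2‖ ≤ M := by simpa using hy.2.2
      have h2 := norm_le_pi_norm y.2.2 m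
      rw [Real.norm_eq_abs] at h2
      linarith
    · have h2 := norm_le_pi_norm (y - y').2.2 m
      have h3 := (norm_snd_le (y - y').2).trans (norm_snd_le (y - y'))
      rw [Real.norm_eq_abs] at h2
      have h4 := norm_nonneg (y - y')
      have : |y.2.2 m - y'.2.2 m| ≤ ‖y - y'‖ := h2.trans h3
      nlinarith
  have blG : ∀ m, BL K (cG H m) := by
    intro m
    unfold cG
    refine BL.sum _ fun i _ => BL.add (BL.sub (BL.add ?_ (BL.mul (bl3 i) ?_)) (BL.add ?_ (BL.mul (bl3 m) ?_)))
      (BL.sum _ fun k _ => BL.sub (BL.mul (bl1 i k) ?_) (BL.mul (bl1 k k) ?_))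
    · exact bl2 _ _ _ (norm_basis_le i).2.2
    · exact bl2 _ _ _ (norm_basis_le i).2.1
    · exact bl2 _ _ _ (norm_basis_le m).2.2
    · exact bl2 _ _ _ (norm_basis_le i).2.1
    · exact bl2 _ _ _ (norm_basis_le m).1
    · exact bl2 _ _ _ (norm_basis_le m).1
  choose LG hLG0 hLG using blG
  have s1 : ∀ i j, LH i j ≤ 1 + (∑ i, ∑ j, LH i j) + ∑ m, LG m := by
    intro i j
    have h1 : LH i j ≤ ∑ j, LH i j :=
      Finset.single_le_sum (f := fun j => LH i j) (fun j _ => by linarith [hLH1 i j]) (Finset.mem_univ j)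
    have h2 : ∑ j, LH i j ≤ ∑ i, ∑ j, LH i j :=
      Finset.single_le_sum (f := fun i => ∑ j, LH i j)
        (fun i _ => Finset.sum_nonneg fun j _ => by linarith [hLH1 i j]) (Finset.mem_univ i)
    have h3 : 0 ≤ ∑ m, LG m := Finset.sum_nonneg fun m _ => hLG0 m
    linarith
  have s2 : ∀ m, LG m ≤ 1 + (∑ i, ∑ j, LH i j) + ∑ m, LG m := by
    intro m
    have h1 : LG m ≤ ∑ m, LG m :=
      Finset.single_le_sum (f := LG) (fun j _ => hLG0 j) (Finset.mem_univ m)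
    have h2 : 0 ≤ ∑ i, ∑ j, LH i j :=
      Finset.sum_nonneg fun i _ => Finset.sum_nonneg fun j _ => by linarith [hLH1 i j]
    linarith
  have s0 : 1 ≤ 1 + (∑ i, ∑ j, LH i j) + ∑ m, LG m := by
    have h2 : 0 ≤ ∑ i, ∑ j, LH i j :=
      Finset.sum_nonneg fun i _ => Finset.sum_nonneg fun j _ => by linarith [hLH1 i j]
    have h3 : 0 ≤ ∑ m, LG m := Finset.sum_nonneg fun m _ => hLG0 m
    linarith
  generalize 1 + (∑ i, ∑ j, LH i j) + ∑ m, LG m = L at s0 s1 s2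
  have mono : ∀ {a b t : ℝ} (y y' : (Fin n → ℝ) × ℝ × (Fin n → ℝ)), t ≤ a * ‖y - y'‖ → a ≤ b →
      t ≤ b * ‖y - y'‖ := fun y y' h1 h2 =>
    h1.trans (mul_le_mul_of_nonneg_right h2 (norm_nonneg _))
  refine ⟨L, s0, fun y hy => ⟨fun i j => ⟨?_, (hLH i j y hy).1.trans (s1 i j), ?_, fun y' hy' =>
    ⟨mono _ _ ((hLH i j y hy).2.2 y' hy').2 (s1 i j), mono _ _ ((hLH i j y hy).2.2 y' hy').1 (s1 i j)⟩⟩,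
    fun i j k => ?_, fun m => ⟨(hLG m y hy).1.trans (s2 m), fun y' hy' => mono _ _ ((hLG m y hy).2 y' hy') (s2 m)⟩⟩⟩
  · exact ((hH i j).1.contDiffAt (hU.mem_nhds (hKU hy))).differentiableAt (by norm_num)
  · exact (BL_fderiv (hLH1 i j) (hLH i j) _ (norm_basis_le i).2.1 y hy).1.trans (s1 i j)
  · have := BL_fderiv (hLH1 i j) (hLH i j) _ (norm_basis_le k).1 y hy
    exact ⟨this.1.trans (s1 i j), fun y' hy' => mono _ _ (this.2 y' hy') (s1 i j)⟩

/-- Integrable with integral bounded below by `-c`. -/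
def LBI {n : ℕ} (B : Set (Fin n → ℝ)) (f : (Fin n → ℝ) → ℝ) (c : ℝ) : Prop :=
  IntegrableOn f B ∧ -c ≤ ∫ x in B, f x

lemma LBI.add {n : ℕ} {B : Set (Fin n → ℝ)} {f g : (Fin n → ℝ) → ℝ} {c d : ℝ}
    (hf : LBI B f c) (hg : LBI B g d) : LBI B (fun x => f x + g x) (c + d) := by
  refine ⟨hf.1.add hg.1, ?_⟩
  rw [integral_add hf.1 hg.1]
  linarith [hf.2, hg.2]

lemma LBI.sum {n : ℕ} {B : Set (Fin n → ℝ)} {f : Fin n → (Fin n → ℝ) → ℝ} {c : ℝ}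
    (hf : ∀ i, LBI B (f i) c) : LBI B (fun x => ∑ i, f i x) (n * c) := by
  refine ⟨integrable_finset_sum _ fun i _ => (hf i).1, ?_⟩
  rw [integral_finset_sum _ fun i _ => (hf i).1]
  have : ∑ _i : Fin n, -c ≤ ∑ i, ∫ x in B, f i x := Finset.sum_le_sum fun i _ => (hf i).2
  simp at this
  linarith

/-- The elementary divergence-type term. -/
noncomputable def tm {n : ℕ} (q : ℝ) (η v a g : (Fin n → ℝ) → ℝ) (j : Fin n) (x : Fin n → ℝ) : ℝ :=
  q * (η x * (max (v x) 0) ^ (q - 1) * (a x * g x * pd j v x)) +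
      η x * (max (v x) 0) ^ q * (a x * pd j g x)

lemma pospow_continuousOn {n : ℕ} {s : Set (Fin n → ℝ)} {v : (Fin n → ℝ) → ℝ}
    (hv : ContinuousOn v s) {p : ℝ} (hp : 0 ≤ p) : ContinuousOn (fun x => (max (v x) 0) ^ p) s :=
  (hv.sup continuousOn_const).rpow_const fun _ _ => Or.inr hp

lemma term_bound {n : ℕ} {x₀ : Fin n → ℝ} {r r' R2 : ℝ} (hrr : r < r') (hr2 : r' ≤ R2)
    {u w v η : (Fin n → ℝ) → ℝ} {M : ℝ} (hM : 0 < M)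
    (hu : ContDiffOn ℝ 3 u (ball x₀ R2))
    (hw : ContinuousOn w (ball x₀ R2)) (hw1 : ∀ y ∈ ball x₀ R2, 1 ≤ w y)
    (hu1 : ∀ y ∈ ball x₀ R2, ∀ i, |pd i u y| ≤ M)
    (hu2 : ∀ y ∈ ball x₀ R2, ∀ i j, |pd i (pd j u) y| ≤ w y)
    {K : Set ((Fin n → ℝ) × ℝ × (Fin n → ℝ))} (hK : ∀ y ∈ ball x₀ R2, jet u y ∈ K)
    (hη : ContDiff ℝ 1 η) (hη0 : ∀ x, x ∉ ball x₀ r → η x = 0)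
    (hηn : ∀ x, 0 ≤ η x ∧ η x ≤ 1) {c : ℝ} (hc : ∀ j x, |pd j η x| ≤ c)
    (hv : ContDiffOn ℝ 1 v (ball x₀ r')) {q : ℝ} (hq : 1 < q)
    {G : (Fin n → ℝ) × ℝ × (Fin n → ℝ) → ℝ} {L : ℝ} (hL : 0 ≤ L)
    (hG : ∀ y ∈ K, |G y| ≤ L ∧ ∀ y' ∈ K, |G y - G y'| ≤ L * ‖y - y'‖)
    {g : (Fin n → ℝ) → ℝ} (hg : ContDiffOn ℝ 1 g (ball x₀ R2))
    (hgw : ∀ x ∈ ball x₀ R2, |g x| ≤ w x) (j : Fin n) :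
    LBI (ball x₀ r) (tm q η v (fun y => G (jet u y)) g j)
      (L * (1 + M) * (c + 1) * ∫ x in ball x₀ r, (max (v x) 0) ^ q * w x ^ 2) := by
  have s1 : ball x₀ r' ⊆ ball x₀ R2 := ball_subset_ball hr2
  have s2 : ball x₀ r ⊆ ball x₀ r' := ball_subset_ball hrr.le
  have hu' := hu.mono s1
  obtain ⟨⟨La, hLa⟩, hac⟩ := jet_comp_lipschitz hrr hu' (fun y hy => hK y (s1 hy)) hL
    (fun y hy y' hy' => (hG y hy).2 y' hy')
  have hLM : L ≤ L * (1 + M) := le_mul_of_one_le_right hL (by linarith)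
  constructor
  · apply integrableOn_of_contOn hrr
    have c1 : ContinuousOn (pd j v) (ball x₀ r') :=
      (pd_contDiffOn (m := 0) isOpen_ball hv (by norm_num) j).continuousOn
    have c2 : ContinuousOn (pd j g) (ball x₀ r') :=
      ((pd_contDiffOn (m := 0) isOpen_ball hg (by norm_num) j).continuousOn).mono s1
    have c3 := hη.continuous.continuousOn (s := ball x₀ r')
    have c4 := pospow_continuousOn hv.continuousOn (p := q - 1) (by linarith)
    have c5 := pospow_continuousOn hv.continuousOn (p := q) (by linarith)
    have c6 := hg.continuousOn.mono s1
    exact (continuousOn_const.mul ((c3.mul c4).mul ((hac.mul c6).mul c1))).add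
      ((c3.mul c5).mul (hac.mul c2))
  · have := ibp_bound hrr hη hη0 hηn hLa hac hv (hg.mono s1) (hw.mono s1) hq j (hc j)
      (L := L * (1 + M)) (N := 1) (fun x hx => hw1 x (s1 (s2 hx)))
      (fun x hx => ((hG _ (hK x (s1 (s2 hx)))).1).trans hLM)
      (fun x hx => ?_) (fun x hx => by rw [one_mul]; exact hgw x (s1 (s2 hx)))
    · simp only [tm]
      rw [mul_one, neg_mul] at this
      exact this
    · have hx2 := s1 (s2 hx)
      have hw1' := hw1 x hx2
      have h0 : 0 ≤ (1 + M) * w x := by positivity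
      rw [mul_assoc]
      refine lineDeriv_jet_bound isOpen_ball hu hx2 j hK hL (fun y hy y' hy' => (hG y hy).2 y' hy') ?_
      rw [jet_fderiv isOpen_ball hu hx2 j]
      refine norm_prod_le_iff.2 ⟨?_, norm_prod_le_iff.2 ⟨?_, (pi_norm_le_iff_of_nonneg h0).2 fun k => ?_⟩⟩
      · simp only [Pi.norm_single, norm_one]; nlinarith
      · have := hu1 x hx2 j
        simp only [Real.norm_eq_abs]; nlinarith
      · have := hu2 x hx2 j k
        simp only [Real.norm_eq_abs]; nlinarith

/-- The full divergence-type sum. -/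
noncomputable def bigS {n : ℕ} (H : ((Fin n → ℝ) × ℝ × (Fin n → ℝ)) → Matrix (Fin n) (Fin n) ℝ)
    (q : ℝ) (η v u : (Fin n → ℝ) → ℝ) (x : Fin n → ℝ) : ℝ :=
  ∑ m, ((∑ i, ∑ k, (tm q η v (fun y => cP H i m k (jet u y)) (pd i (pd k u)) m x +
      tm q η v (fun y => (fun z => -cP H i i k z) (jet u y)) (pd m (pd k u)) m x +
      tm q η v (fun y => cP H i i m (jet u y)) (pd k (pd k u)) m x +
      tm q η v (fun y => (fun z => -cP H i k m z) (jet u y)) (pd i (pd k u)) m x)) +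
      tm q η v (fun y => cG H m (jet u y)) (fun _ => 1) m x)

lemma bigS_bound {n : ℕ} {x₀ : Fin n → ℝ} {r r' R2 : ℝ} (hrr : r < r') (hr2 : r' ≤ R2)
    {u w v η : (Fin n → ℝ) → ℝ} {M : ℝ} (hM : 0 < M)
    (hu : ContDiffOn ℝ 3 u (ball x₀ R2))
    (hw : ContinuousOn w (ball x₀ R2)) (hw1 : ∀ y ∈ ball x₀ R2, 1 ≤ w y)
    (hu1 : ∀ y ∈ ball x₀ R2, ∀ i, |pd i u y| ≤ M)
    (hu2 : ∀ y ∈ ball x₀ R2, ∀ i j, |pd i (pd j u) y| ≤ w y)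
    {K : Set ((Fin n → ℝ) × ℝ × (Fin n → ℝ))} (hK : ∀ y ∈ ball x₀ R2, jet u y ∈ K)
    (hη : ContDiff ℝ 1 η) (hη0 : ∀ x, x ∉ ball x₀ r → η x = 0)
    (hηn : ∀ x, 0 ≤ η x ∧ η x ≤ 1) {c : ℝ} (hc : ∀ j x, |pd j η x| ≤ c)
    (hv : ContDiffOn ℝ 1 v (ball x₀ r')) {q : ℝ} (hq : 1 < q)
    (H : ((Fin n → ℝ) × ℝ × (Fin n → ℝ)) → Matrix (Fin n) (Fin n) ℝ) {L : ℝ} (hL : 0 ≤ L)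
    (hP : ∀ i j k, ∀ y ∈ K, |cP H i j k y| ≤ L ∧ ∀ y' ∈ K, |cP H i j k y - cP H i j k y'| ≤ L * ‖y - y'‖)
    (hG : ∀ m, ∀ y ∈ K, |cG H m y| ≤ L ∧ ∀ y' ∈ K, |cG H m y - cG H m y'| ≤ L * ‖y - y'‖) :
    LBI (ball x₀ r) (bigS H q η v u) (n * (n * (n * 4) + 1) *
      (L * (1 + M) * (c + 1) * ∫ x in ball x₀ r, (max (v x) 0) ^ q * w x ^ 2)) := by
  have hP' : ∀ i j k, ∀ y ∈ K, |(fun z => -cP H i j k z) y| ≤ L ∧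
      ∀ y' ∈ K, |(fun z => -cP H i j k z) y - (fun z => -cP H i j k z) y'| ≤ L * ‖y - y'‖ := by
    intro i j k y hy
    refine ⟨by simpa using (hP i j k y hy).1, fun y' hy' => ?_⟩
    have e : -cP H i j k y - -cP H i j k y' = -(cP H i j k y - cP H i j k y') := by ring
    simp only
    rw [e, abs_neg]
    exact (hP i j k y hy).2 y' hy'
  have hgU : ∀ i k, ContDiffOn ℝ 1 (pd i (pd k u)) (ball x₀ R2) := fun i k =>
    pd_contDiffOn isOpen_ball (pd_contDiffOn (m := 2) isOpen_ball hu (by norm_num) k) (by norm_num) i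
  have key : ∀ (G : (Fin n → ℝ) × ℝ × (Fin n → ℝ) → ℝ)
    (_ : ∀ y ∈ K, |G y| ≤ L ∧ ∀ y' ∈ K, |G y - G y'| ≤ L * ‖y - y'‖) (i k m : Fin n), _ := fun G hG i k m =>
    term_bound hrr hr2 hM hu hw hw1 hu1 hu2 hK hη hη0 hηn hc hv hq hL hG (hgU i k)
      (fun x hx => hu2 x hx i k) m
  have key2 := fun m => term_bound hrr hr2 hM hu hw hw1 hu1 hu2 hK hη hη0 hηn hc hv hq hL (hG m)
    (g := fun _ => 1) contDiffOn_const (fun x hx => by simpa using hw1 x hx) m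
  generalize (L * (1 + M) * (c + 1) * ∫ x in ball x₀ r, (max (v x) 0) ^ q * w x ^ 2) = D at key key2 ⊢
  have := LBI.sum fun m => LBI.add (LBI.sum fun i => LBI.sum fun k => LBI.add (LBI.add (LBI.add
    (key _ (hP i m k) i k m) (key _ (hP' i i k) m k m)) (key _ (hP i i m) k k m)) (key _ (hP' i k m) i k m))
    (key2 m)
  have e : (n : ℝ) * (n * (n * 4) + 1) * D = n * (n * (n * (D + D + D + D)) + D) := by ring
  rw [e]
  exact this

lemma bigS_eq {n : ℕ} {O : Set (Fin n → ℝ)} (hO : IsOpen O) {u : (Fin n → ℝ) → ℝ}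
    (hu : ContDiffOn ℝ 3 u O) {x : Fin n → ℝ} (hx : x ∈ O)
    (H : ((Fin n → ℝ) × ℝ × (Fin n → ℝ)) → Matrix (Fin n) (Fin n) ℝ)
    (q : ℝ) (η v : (Fin n → ℝ) → ℝ) :
    bigS H q η v u x = q * (η x * (max (v x) 0) ^ (q - 1) *
      ∑ m, ((∑ i, ∑ k, (cP H i m k (jet u x) * pd i (pd k u) x + (-cP H i i k (jet u x)) * pd m (pd k u) x
        + cP H i i m (jet u x) * pd k (pd k u) x + (-cP H i k m (jet u x)) * pd i (pd k u) x)) +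
        cG H m (jet u x)) * pd m v x) := by
  have h2 := alg2 (fun i j k => cP H i j k (jet u x)) (fun i j k => pd i (pd j (pd k u)) x)
    (fun i j k => (pd_comm13 hO hu hx i j k).1) (fun i j k => (pd_comm13 hO hu hx i j k).2)
  have hone : ∀ m : Fin n, pd m (fun _ : Fin n → ℝ => (1:ℝ)) x = 0 := fun m => by simp [pd]
  have e : bigS H q η v u x = q * (η x * (max (v x) 0) ^ (q - 1) *
      ∑ m, ((∑ i, ∑ k, (cP H i m k (jet u x) * pd i (pd k u) x + (-cP H i i k (jet u x)) * pd m (pd k u) x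
        + cP H i i m (jet u x) * pd k (pd k u) x + (-cP H i k m (jet u x)) * pd i (pd k u) x)) +
        cG H m (jet u x)) * pd m v x) + η x * (max (v x) 0) ^ q * ∑ m, ∑ i, ∑ k,
      (cP H i m k (jet u x) * pd m (pd i (pd k u)) x + (-cP H i i k (jet u x)) * pd m (pd m (pd k u)) x
      + cP H i i m (jet u x) * pd m (pd k (pd k u)) x + (-cP H i k m (jet u x)) * pd m (pd i (pd k u)) x) := by
    simp only [bigS, tm, hone]
    simp only [add_mul, Finset.sum_mul, Finset.mul_sum, ← Finset.sum_add_distrib, mul_add]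
    refine Finset.sum_congr rfl fun m _ => ?_
    rw [add_right_comm, ← Finset.sum_add_distrib]
    congr 1
    · refine Finset.sum_congr rfl fun i _ => ?_
      rw [← Finset.sum_add_distrib]
      refine Finset.sum_congr rfl fun k _ => ?_
      ring
    · ring
  rw [e, h2]
  ring

lemma rest_ptw {n : ℕ} {q e φ vt w M L C₁ : ℝ} (hq : 1 < q) (hM : 0 < M) (hL : 1 ≤ L)
    (hC0 : 0 ≤ C₁) (hC : C₁ ≤ M) (hw : 1 ≤ w) (hφ : φ = max vt 0) (he0 : 0 ≤ e) (he1 : e ≤ 1)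
    {F W : Fin n → Fin n → ℝ} {a b : Fin n → ℝ} (ha : ∀ l, 0 ≤ a l) (hb : ∀ l, 0 ≤ b l)
    (hF : ∀ i j, |F i j| ≤ (n + 1) * (1 + L) * w)
    (hW : ∀ i j, |W i j| ≤ L * |vt - C₁| + ∑ l, L * (1 + M) ^ 2 * (a l ^ 2 + b l ^ 2)) :
    -((n ^ 2 * (n + 1) * (1 + L) * L * (1 + M) ^ 2 * (2 * n + 3)) *
      (φ ^ (q + 2) + w ^ (q + 2) + ∑ l, (a l ^ (q + 2) + b l ^ (q + 2)))) ≤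
      e * φ ^ (q - 1) * ∑ i, ∑ j, F i j * W i j := by
  have hφ0 : 0 ≤ φ := hφ ▸ le_max_right _ _
  have hw0 : 0 ≤ w := by linarith
  have hS0 : 0 ≤ ∑ l, (a l ^ (q + 2) + b l ^ (q + 2)) := Finset.sum_nonneg fun l _ =>
    add_nonneg (Real.rpow_nonneg (ha l) _) (Real.rpow_nonneg (hb l) _)
  have hpw := Real.rpow_nonneg hw0 (q + 2)
  have hpφ := Real.rpow_nonneg hφ0 (q + 2)
  set Q := φ ^ (q + 2) + w ^ (q + 2) + ∑ l, (a l ^ (q + 2) + b l ^ (q + 2)) with hQ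
  have hQ0 : 0 ≤ Q := by positivity
  rcases hφ0.eq_or_lt with h0 | hpos
  · rw [← h0, Real.zero_rpow (by linarith), mul_zero, zero_mul]
    have : 0 ≤ (n ^ 2 * (n + 1) * (1 + L) * L * (1 + M) ^ 2 * (2 * n + 3)) * Q := by positivity
    linarith
  have hvt : vt = φ := by
    rcases le_total vt 0 with h | h
    · rw [max_eq_right h] at hφ; linarith
    · rw [max_eq_left h] at hφ; exact hφ.symm
  have hvh : |vt - C₁| ≤ (1 + M) ^ 2 * (φ ^ 2 + w ^ 2) := by
    have h1 : |vt - C₁| ≤ φ + M := by rw [hvt, abs_le]; constructor <;> linarith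
    have h2 : φ + M ≤ (1 + M) * (φ ^ 2 + w ^ 2) := by
      have : 1 ≤ w ^ 2 := by nlinarith
      nlinarith [sq_nonneg (φ - 1), mul_nonneg hM.le (sq_nonneg φ)]
    have h3 : (1 + M) * (φ ^ 2 + w ^ 2) ≤ (1 + M) ^ 2 * (φ ^ 2 + w ^ 2) := by
      apply mul_le_mul_of_nonneg_right _ (by positivity); nlinarith
    linarith
  have hW2 : ∀ i j, |W i j| ≤ L * (1 + M) ^ 2 * (φ ^ 2 + w ^ 2 + ∑ l, (a l ^ 2 + b l ^ 2)) := by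
    intro i j
    refine (hW i j).trans ?_
    rw [← Finset.mul_sum, mul_add (L * (1 + M) ^ 2), mul_assoc L ((1 + M) ^ 2) (φ ^ 2 + w ^ 2)]
    gcongr
  have hy : φ ^ (q - 1) * w * (φ ^ 2 + w ^ 2 + ∑ l, (a l ^ 2 + b l ^ 2)) ≤ (2 * n + 3) * Q := by
    have y1 := young1 hq hw0 hφ0 hφ0
    have y2 := young1 hq hw0 hw0 hφ0
    have y3 : ∑ l, φ ^ (q - 1) * w * (a l ^ 2 + b l ^ 2) ≤ ∑ l, (2 * (φ ^ (q + 2) + w ^ (q + 2)) +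
        (a l ^ (q + 2) + b l ^ (q + 2))) := Finset.sum_le_sum fun l _ => by
      have := young1 hq hw0 (ha l) hφ0
      have := young1 hq hw0 (hb l) hφ0
      linarith
    rw [Finset.sum_add_distrib, ← Finset.mul_sum] at y3
    simp only [Finset.sum_const, Finset.card_univ, Fintype.card_fin, nsmul_eq_mul] at y3
    rw [mul_add, mul_add]
    have : 0 ≤ (n : ℝ) * ∑ l, (a l ^ (q + 2) + b l ^ (q + 2)) := by positivity
    rw [hQ]
    nlinarith
  have hp := Real.rpow_nonneg hφ0 (q - 1)
  have hterm : ∀ i j, φ ^ (q - 1) * |F i j * W i j| ≤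
      ((n + 1) * (1 + L) * L * (1 + M) ^ 2 * (2 * n + 3)) * Q := by
    intro i j
    rw [abs_mul]
    calc φ ^ (q - 1) * (|F i j| * |W i j|) ≤ φ ^ (q - 1) * (((n + 1) * (1 + L) * w) *
          (L * (1 + M) ^ 2 * (φ ^ 2 + w ^ 2 + ∑ l, (a l ^ 2 + b l ^ 2)))) := by
          gcongr
          · exact hF i j
          · exact hW2 i j
      _ = ((n + 1) * (1 + L) * L * (1 + M) ^ 2) *
          (φ ^ (q - 1) * w * (φ ^ 2 + w ^ 2 + ∑ l, (a l ^ 2 + b l ^ 2))) := by ring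
      _ ≤ ((n + 1) * (1 + L) * L * (1 + M) ^ 2) * ((2 * n + 3) * Q) := by gcongr
      _ = _ := by ring
  have hsum : |φ ^ (q - 1) * ∑ i, ∑ j, F i j * W i j| ≤
      (n ^ 2 * (n + 1) * (1 + L) * L * (1 + M) ^ 2 * (2 * n + 3)) * Q := by
    rw [abs_mul, abs_of_nonneg hp]
    calc _ ≤ φ ^ (q - 1) * ∑ i, ∑ j, |F i j * W i j| := by
          gcongr
          exact (Finset.abs_sum_le_sum_abs _ _).trans
            (Finset.sum_le_sum fun i _ => Finset.abs_sum_le_sum_abs _ _)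
      _ = ∑ i, ∑ j, φ ^ (q - 1) * |F i j * W i j| := by simp only [Finset.mul_sum]
      _ ≤ ∑ _i : Fin n, ∑ _j : Fin n, ((n + 1) * (1 + L) * L * (1 + M) ^ 2 * (2 * n + 3)) * Q :=
          Finset.sum_le_sum fun i _ => Finset.sum_le_sum fun j _ => hterm i j
      _ = _ := by simp; ring
  have h1 := (abs_le.1 hsum).1
  have hZ : 0 ≤ (n ^ 2 * (n + 1) * (1 + L) * L * (1 + M) ^ 2 * (2 * n + 3)) * Q := by positivity
  rw [mul_assoc]
  nlinarith

lemma newton_abs {n : ℕ} (hn : 3 ≤ n) {A B : Matrix (Fin n) (Fin n) ℝ} {w L : ℝ} (hw : 1 ≤ w)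
    (hL : 1 ≤ L) (hA : ∀ i j, |A i j| ≤ w) (hB : ∀ i j, |B i j| ≤ L) (i j : Fin n) :
    |newtonT 1 (A - B) i j| ≤ (n + 1) * (1 + L) * w := by
  have h1 : ∀ i j, |(A - B) i j| ≤ (1 + L) * w := fun i j => by
    have := abs_sub (A i j) (B i j)
    have := hA i j
    have := hB i j
    rw [Matrix.sub_apply]
    nlinarith
  have h0 : 0 ≤ (1 + L) * w := by positivity
  rw [newtonT_one_apply hn]
  have h2 : |∑ k, (A - B) k k| ≤ n * ((1 + L) * w) := by
    refine (Finset.abs_sum_le_sum_abs _ _).trans ((Finset.sum_le_sum fun k _ => h1 k k).trans ?_)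
    simp
  have h3 : |(∑ k, (A - B) k k) * (if i = j then 1 else 0)| ≤ n * ((1 + L) * w) := by
    split_ifs
    · simpa using h2
    · simp; positivity
  have h4 := abs_sub ((∑ k, (A - B) k k) * (if i = j then 1 else 0)) ((A - B) i j)
  have := h1 i j
  linarith

lemma main_ptw {n : ℕ} (hn : 3 ≤ n) {x₀ x : Fin n → ℝ} {r r' R2 h : ℝ} (hx : x ∈ ball x₀ r)
    (hr : r < r') (hr2 : r' + |h| ≤ R2) (hh : h ≠ 0) {u w η : (Fin n → ℝ) → ℝ} {M C₁ q : ℝ}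
    (hM : 0 < M) (hC0 : 0 ≤ C₁) (hC : C₁ ≤ M) (hq : 1 < q)
    (hu : ContDiffOn ℝ 3 u (ball x₀ R2))
    (hw : ContinuousOn w (ball x₀ R2)) (hw1 : ∀ y ∈ ball x₀ R2, 1 ≤ w y)
    (hu1 : ∀ y ∈ ball x₀ R2, ∀ i, |pd i u y| ≤ M)
    (hu2 : ∀ y ∈ ball x₀ R2, ∀ i j, |pd i (pd j u) y| ≤ w y)
    (hη : 0 ≤ η x ∧ η x ≤ 1)
    {K : Set ((Fin n → ℝ) × ℝ × (Fin n → ℝ))} (hK : ∀ y ∈ ball x₀ R2, jet u y ∈ K)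
    (hKc : Convex ℝ K)
    (H : ((Fin n → ℝ) × ℝ × (Fin n → ℝ)) → Matrix (Fin n) (Fin n) ℝ) {L : ℝ} (hL : 1 ≤ L)
    (hH : ∀ y ∈ K, ∀ i j, DifferentiableAt ℝ (fun y => H y i j) y ∧ |H y i j| ≤ L ∧ |cZ H i j y| ≤ L ∧
        ∀ y' ∈ K, |H y i j - H y' i j| ≤ L * ‖y - y'‖ ∧
        ‖fderiv ℝ (fun y => H y i j) y - fderiv ℝ (fun y => H y i j) y'‖ ≤ L * ‖y - y'‖) :
    (1 / q) * bigS H q η (fun y => (∑ l, ddq l h u y) + C₁) u x -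
      (n ^ 2 * (n + 1) * (1 + L) * L * (1 + M) ^ 2 * (2 * n + 3)) *
      ((max ((∑ l, ddq l h u x) + C₁) 0) ^ (q + 2) + w x ^ (q + 2) +
        ∑ l, (segAvg w l h x ^ (q + 2) + segAvg w l (-h) x ^ (q + 2))) ≤
    η x * (max ((∑ l : Fin n, ddq l h u x) + C₁) 0) ^ (q - 1) *
            ∑ j, (∑ i, pd i (fun y =>
                newtonT 1 (hess u y - H (y, u y, grad u y)) i j) x) *
              pd j (fun y => (∑ l : Fin n, ddq l h u y) + C₁) x +
     ∑ l : Fin n, η x * (max ((∑ l' : Fin n, ddq l' h u x) + C₁) 0) ^ (q - 1) *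
              ∑ i, ∑ j, newtonT 1 (hess u x - H (x, u x, grad u x)) i j *
                ddq l h (fun y => H (y, u y, grad u y) i j) x := by
  have hah := abs_nonneg h
  have hxR : x ∈ ball x₀ R2 := ball_subset_ball (by linarith) hx
  have hxc : x ∈ closedBall x₀ r := ball_subset_closedBall hx
  have hr3 : r + |h| < R2 := by linarith
  have hr3' : r + |-h| < R2 := by rwa [abs_neg]
  have hjx := hK x hxR
  rw [bigS_eq isOpen_ball hu hxR]
  set v := fun y => (∑ l, ddq l h u y) + C₁ with hv
  set φ := max ((∑ l, ddq l h u x) + C₁) 0 with hφ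
  have hpv : ∀ k, pd k v x = ∑ l, ddq l h (pd k u) x := fun k =>
    pd_ddq hx hr3.le (hu.of_le (by norm_num)) k C₁
  -- the error term
  set W : Fin n → Fin n → ℝ := fun i j => (∑ l, ddq l h (fun y => H (y, u y, grad u y) i j) x) -
    ∑ k, cP H i j k (jet u x) * pd k v x with hWdef
  set F : Fin n → Fin n → ℝ := fun i j => newtonT 1 (hess u x - H (x, u x, grad u x)) i j with hF
  have hWb : ∀ i j, |W i j| ≤ L * |v x - C₁| + ∑ l, L * (1 + M) ^ 2 *
      (segAvg w l h x ^ 2 + segAvg w l (-h) x ^ 2) := by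
    intro i j
    have hl := fun l => ddq_H_bound hxc l hr3 hh hM hu hw hw1 hu1 hu2 hK hKc
      (f := fun y => H y i j) (L := L) (by linarith) (fun y hy => (hH y hy i j).1)
      (fun y hy y' hy' => ((hH y hy i j).2.2.2 y' hy').2)
    have e : W i j = cZ H i j (jet u x) * (v x - C₁) +
        ∑ l, (ddq l h (fun y => H (jet u y) i j) x - (cZ H i j (jet u x) * ddq l h u x +
      ∑ k, cP H i j k (jet u x) * ddq l h (pd k u) x)) := by
      have hvC : v x - C₁ = ∑ l, ddq l h u x := by simp [hv]
      simp only [hWdef, hpv]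
      simp only [hvC, Finset.sum_sub_distrib, Finset.sum_add_distrib, Finset.mul_sum]
      rw [Finset.sum_comm]
      simp only [jet]
      ring
    rw [e]
    refine (abs_add_le _ _).trans (add_le_add ?_ ((Finset.abs_sum_le_sum_abs _ _).trans
      (Finset.sum_le_sum fun l _ => hl l)))
    rw [abs_mul]
    exact mul_le_mul_of_nonneg_right (hH _ hjx i j).2.2.1 (abs_nonneg _)
  have hFb : ∀ i j, |F i j| ≤ (n + 1) * (1 + L) * w x := fun i j =>
    newton_abs hn (hw1 x hxR) hL (fun i j => hu2 x hxR i j) (fun i j => (hH _ hjx i j).2.1) i j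
  have hw0 : ∀ y ∈ ball x₀ R2, 0 ≤ w y := fun y hy => zero_le_one.trans (hw1 y hy)
  have hrest := rest_ptw (e := η x) (vt := v x) hq hM hL hC0 hC (hw1 x hxR) hφ hη.1 hη.2
    (F := F) (W := W) (a := fun l => segAvg w l h x) (b := fun l => segAvg w l (-h) x)
    (fun l => zero_le_one.trans (one_le_segAvg hxc l hr3 hw hw1))
    (fun l => zero_le_one.trans (one_le_segAvg hxc l hr3' hw hw1)) hFb hWb
  have hdH : ∀ i j, DifferentiableAt ℝ (fun y => H (y, u y, grad u y) i j) x := fun i j =>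
    DifferentiableAt.comp x (g := fun y => H y i j) (f := jet u) (hH _ hjx i j).1
      (((jet_contDiffOn isOpen_ball hu).contDiffAt (isOpen_ball.mem_nhds hxR)).differentiableAt (by norm_num))
  have hN := fun j => pd_newton hn isOpen_ball hu hxR (fun i j y => H (y, u y, grad u y) i j)
    (fun y => H (y, u y, grad u y)) (fun _ _ _ => rfl) hdH j
  have hPH := fun i j m => pd_H isOpen_ball hu hxR H i j m (hH _ hjx i j).1
  have ha := alg1 (fun i j k => cP H i j k (jet u x)) (fun i j => cZ H i j (jet u x))
    (fun i j k => cX H i j k (jet u x)) (fun i j => pd i (pd j u) x) (fun i j => H (jet u x) i j)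
    (fun i => pd i u x) (fun m => pd m v x)
  have eB : ∑ l, η x * φ ^ (q - 1) * ∑ i, ∑ j, F i j * ddq l h (fun y => H (y, u y, grad u y) i j) x =
      η x * φ ^ (q - 1) * ((∑ i, ∑ j, F i j * ∑ m, cP H i j m (jet u x) * pd m v x) +
        ∑ i, ∑ j, F i j * W i j) := by
    rw [← Finset.mul_sum]
    congr 1
    rw [Finset.sum_comm, ← Finset.sum_add_distrib]
    refine Finset.sum_congr rfl fun i _ => ?_
    rw [Finset.sum_comm, ← Finset.sum_add_distrib]
    refine Finset.sum_congr rfl fun j _ => ?_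
    rw [← Finset.mul_sum, ← mul_add]
    congr 1
    simp only [hWdef]
    ring
  have eF : ∀ i j, F i j = (∑ k, (pd k (pd k u) x - H (jet u x) k k)) * (if i = j then 1 else 0) -
      (pd i (pd j u) x - H (jet u x) i j) := fun i j => by
    simp only [hF]
    rw [newtonT_one_apply hn]
    rfl
  rw [eB]
  simp only [hN, hPH]
  simp only [← eF] at ha
  have hG : ∀ m, cG H m (jet u x) = ∑ i, ((cX H i m i (jet u x) + pd i u x * cZ H i m (jet u x)) -
      (cX H i i m (jet u x) + pd m u x * cZ H i i (jet u x)) +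
      ∑ k, (H (jet u x) i k * cP H i k m (jet u x) - H (jet u x) k k * cP H i i m (jet u x))) := fun m => rfl
  simp only [hG]
  rw [← ha]
  have hq0 : q ≠ 0 := by linarith
  rw [← mul_assoc (1 / q), one_div_mul_cancel hq0, one_mul, mul_add, mul_add]
  linarith

lemma final_arith {N q ρ R M L c₀ C₂ X Y Y' I S J : ℝ} (hN : 0 ≤ N) (hR : 0 < R) (hM : 0 < M)
    (hc₀ : 0 < c₀) (hL0 : 0 ≤ L) (hq : 1 < q) (hρ : 0 < ρ) (hρR : ρ ≤ R / 3) (hC₂0 : 0 ≤ C₂)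
    (hX0 : 0 ≤ X) (hY0 : 0 ≤ Y) (hYr : Y' ≤ Y) (hJ : J ≤ 2 * N * Y) (hφw : I ≤ 2 * (Y + X)) (hI0 : 0 ≤ I)
    (hSb : -(N * (N * (N * 4) + 1) * (L * (1 + M) * (c₀ / ρ + 1) * I)) ≤ S) :
    -((2 * (N * (N * (N * 4) + 1)) * (L * (1 + M)) * (c₀ * R + R ^ 2) +
      C₂ * (2 * N + 1) * R ^ 2) / ρ ^ 2) * (X + Y) ≤ 1 / q * S - C₂ * (X + Y' + J) := by
  have hD : ∀ D : ℝ, 0 ≤ D → -D ≤ S → -D ≤ (1 / q) * S := fun D hD hDS => by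
    have h1 : 1 / q ≤ 1 := by rw [div_le_one (by linarith)]; exact hq.le
    have h2 : 0 ≤ 1 / q := by positivity
    nlinarith
  have hq1 := hD _ (by positivity) hSb
  have hρ2 : 0 < ρ ^ 2 := by positivity
  have hc1 : c₀ / ρ + 1 ≤ (c₀ * R + R ^ 2) / ρ ^ 2 := by
    rw [le_div_iff₀ hρ2]
    have : (c₀ / ρ + 1) * ρ ^ 2 = c₀ * ρ + ρ ^ 2 := by field_simp
    rw [this]
    nlinarith
  have hR1 : 1 ≤ R ^ 2 / ρ ^ 2 := by
    rw [le_div_iff₀ hρ2]; nlinarith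
  have f1 : N * (N * (N * 4) + 1) * (L * (1 + M) * (c₀ / ρ + 1) * I) ≤
      N * (N * (N * 4) + 1) * (L * (1 + M) * ((c₀ * R + R ^ 2) / ρ ^ 2) * (2 * (Y + X))) := by
    gcongr
  have f2 : C₂ * (X + Y' + J) ≤ C₂ * ((2 * N + 1) * (X + Y)) := by
    refine mul_le_mul_of_nonneg_left ?_ hC₂0
    have : 0 ≤ N * X := by positivity
    linarith
  have f3 : C₂ * ((2 * N + 1) * (X + Y)) ≤ C₂ * ((2 * N + 1) * (X + Y)) * (R ^ 2 / ρ ^ 2) :=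
    le_mul_of_one_le_right (by positivity) hR1
  have f4 : -((2 * (N * (N * (N * 4) + 1)) * (L * (1 + M)) * (c₀ * R + R ^ 2) +
      C₂ * (2 * N + 1) * R ^ 2) / ρ ^ 2) * (X + Y) =
      -(N * (N * (N * 4) + 1) * (L * (1 + M) * ((c₀ * R + R ^ 2) / ρ ^ 2) * (2 * (Y + X)))) -
      C₂ * ((2 * N + 1) * (X + Y)) * (R ^ 2 / ρ ^ 2) := by ring
  rw [f4]
  linarith

/-- Cancellation of higher order terms for `k = 2` with general `H`
(Corollary 4.9, estimate (L), for classical functions). -/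
theorem cancellation_higher_order_k2_generalH
    {n : ℕ} (hn : 3 ≤ n)
    (Ω : Set (Fin n → ℝ)) (hΩ : IsOpen Ω)
    (H : ((Fin n → ℝ) × ℝ × (Fin n → ℝ)) → Matrix (Fin n) (Fin n) ℝ)
    (hH : ∀ i j : Fin n,
      C11On (fun y => H y i j) (Ω ×ˢ ((univ : Set ℝ) ×ˢ (univ : Set (Fin n → ℝ)))))
    (hHsymm : ∀ y ∈ Ω ×ˢ ((univ : Set ℝ) ×ˢ (univ : Set (Fin n → ℝ))), (H y).IsSymm)
    (x₀ : Fin n → ℝ) (R : ℝ) (hR : 0 < R)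
    (hball : closure (ball x₀ (2 * R)) ⊆ Ω)
    (M : ℝ) (hM : 0 < M) (c₀ : ℝ) (hc₀ : 0 < c₀) :
    ∃ C : ℝ, ∀ (u : (Fin n → ℝ) → ℝ) (C₁ q ρ h : ℝ) (η : (Fin n → ℝ) → ℝ),
      ContDiffOn ℝ 3 u Ω →
      (∀ x ∈ ball x₀ (2 * R), |u x| + vnorm (grad u x) ≤ M) →
      0 ≤ C₁ → C₁ ≤ M →
      (∀ x ∈ ball x₀ (2 * R), 1 ≤ lapl u x + C₁ ∧ matNorm (hess u x) ≤ lapl u x + C₁) →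
      1 < q → 0 < ρ → ρ ≤ R / 3 → h ≠ 0 → |h| < ρ →
      ContDiff ℝ (⊤ : ℕ∞) η →
      (∀ x, x ∉ ball x₀ (R + 2 * ρ) → η x = 0) →
      (∀ x, 0 ≤ η x ∧ η x ≤ 1) →
      (∀ x ∈ ball x₀ (R + ρ), η x = 1) →
      (∀ x, vnorm (grad η x) ≤ c₀ / ρ) →
      (∀ x, matNorm (hess η x) ≤ c₀ / ρ ^ 2) →
      (∫ x in ball x₀ (R + 2 * ρ),
          η x * (max ((∑ l : Fin n, ddq l h u x) + C₁) 0) ^ (q - 1) *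
            ∑ j, (∑ i, pd i (fun y =>
                newtonT 1 (hess u y - H (y, u y, grad u y)) i j) x) *
              pd j (fun y => (∑ l : Fin n, ddq l h u y) + C₁) x)
        + ∑ l : Fin n, ∫ x in ball x₀ (R + 2 * ρ),
            η x * (max ((∑ l' : Fin n, ddq l' h u x) + C₁) 0) ^ (q - 1) *
              ∑ i, ∑ j, newtonT 1 (hess u x - H (x, u x, grad u x)) i j *
                ddq l h (fun y => H (y, u y, grad u y) i j) x
      ≥ -(C / ρ ^ 2) *
          ((∫ x in ball x₀ (R + 2 * ρ),
              (max ((∑ l : Fin n, ddq l h u x) + C₁) 0) ^ (q + 2))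
            + ∫ x in ball x₀ (R + 3 * ρ), (lapl u x + C₁) ^ (q + 2)) := by
  have hcb : closedBall x₀ (2 * R) ⊆ Ω := by
    rwa [closure_ball x₀ (by positivity)] at hball
  obtain ⟨L, hL, hK⟩ := consts hΩ H hH hM hcb
  have hL0 : 0 ≤ L := by linarith
  refine ⟨2 * (n * (n * (n * 4) + 1)) * (L * (1 + M)) * (c₀ * R + R ^ 2) +
    (n ^ 2 * (n + 1) * (1 + L) * L * (1 + M) ^ 2 * (2 * n + 3)) * (2 * n + 1) * R ^ 2, ?_⟩
  intro u C₁ q ρ h η hu hub hC0 hC hlap hq hρ hρR hh hhρ hη hη0 hηn _ hη1 _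
  have hbR : ball x₀ (2 * R) ⊆ Ω := ball_subset_closedBall.trans hcb
  have hah := abs_nonneg h
  have huB : ContDiffOn ℝ 3 u (ball x₀ (2 * R)) := hu.mono hbR
  have hKU : ∀ x ∈ ball x₀ (2 * R), jet u x ∈ jetK x₀ (2 * R) M := fun x hx => jet_mem hM hx (hub x hx)
  have hu1 : ∀ y ∈ ball x₀ (2 * R), ∀ i, |pd i u y| ≤ M := fun y hy i => by
    have h1 := abs_le_vnorm (grad u y) i
    have h2 := hub y hy
    have h3 := abs_nonneg (u y)
    have h4 : |grad u y i| = |pd i u y| := rfl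
    linarith
  set w : (Fin n → ℝ) → ℝ := fun x => lapl u x + C₁ with hwdef
  have hw1 : ∀ y ∈ ball x₀ (2 * R), 1 ≤ w y := fun y hy => (hlap y hy).1
  have hu2 : ∀ y ∈ ball x₀ (2 * R), ∀ i j, |pd i (pd j u) y| ≤ w y := fun y hy i j =>
    (abs_entry_le_matNorm (hess u y) i j).trans (hlap y hy).2
  have hU2 : ∀ i j, ContDiffOn ℝ 1 (pd i (pd j u)) Ω := fun i j =>
    pd_contDiffOn hΩ (pd_contDiffOn (m := 2) hΩ hu (by norm_num) j) (by norm_num) i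
  have hwΩ : ContinuousOn w Ω :=
    (continuousOn_finset_sum _ fun l _ => (hU2 l l).continuousOn).add continuousOn_const
  have hw := hwΩ.mono hbR
  set r := R + 2 * ρ with hrdef
  set r3 := R + 3 * ρ with hr3def
  have hr3R : r3 ≤ 2 * R := by rw [hr3def]; linarith
  have hrh : r + |h| < r3 := by rw [hr3def, hrdef]; linarith
  have hrh' : r + |-h| < r3 := by rwa [abs_neg]
  obtain ⟨r', hr'⟩ : ∃ r', r' = 2 * R - |h| := ⟨_, rfl⟩
  have hrr : r < r' := by rw [hr']; linarith
  have hr2 : r' + |h| ≤ 2 * R := by rw [hr']; linarith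
  have hr2' : r' ≤ 2 * R := by linarith
  have hB3 : ball x₀ r ⊆ ball x₀ r3 := ball_subset_ball (by linarith)
  have hB32 : ball x₀ r3 ⊆ ball x₀ (2 * R) := ball_subset_ball hr3R
  have hB' : ball x₀ r' ⊆ ball x₀ (2 * R) := ball_subset_ball hr2'
  set v : (Fin n → ℝ) → ℝ := fun y => (∑ l : Fin n, ddq l h u y) + C₁ with hvdef
  have hv : ContDiffOn ℝ 1 v (ball x₀ r') :=
    (ContDiffOn.sum fun l _ => ddq_contDiffOn l hr2 (huB.of_le (by norm_num))).add contDiffOn_const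
  have hη1' : ContDiff ℝ 1 η := hη.of_le (by exact_mod_cast le_top)
  have hc : ∀ j x, |pd j η x| ≤ c₀ / ρ := fun j x => (abs_le_vnorm (grad η x) j).trans (hη1 x)
  -- the divergence part
  have hS := bigS_bound hrr hr2' hM huB hw hw1 hu1 hu2 hKU hη1' hη0 hηn hc hv hq H hL0
    (fun i j k y hy => (hK y hy).2.1 i j k) (fun m y hy => (hK y hy).2.2 m)
  -- the pointwise estimate
  have hpt := fun x (hx : x ∈ ball x₀ r) => main_ptw (η := η) hn hx hrr hr2 hh hM hC0 hC hq huB hw hw1 hu1 hu2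
    (hηn x) hKU (jetK_convex _ _ _) H hL (fun y hy => (hK y hy).1)
  set C₂ : ℝ := n ^ 2 * (n + 1) * (1 + L) * L * (1 + M) ^ 2 * (2 * n + 3) with hC₂
  have hC₂0 : 0 ≤ C₂ := by positivity
  -- integrability
  have hwp : ContinuousOn (fun x => w x ^ (q + 2)) (closedBall x₀ (2 * R)) :=
    (hwΩ.mono hcb).rpow_const fun _ _ => Or.inr (by linarith)
  have hwp3 : ContinuousOn (fun x => w x ^ (q + 2)) (ball x₀ r3) :=
    hwp.mono (hB32.trans ball_subset_closedBall)
  have iw3 : IntegrableOn (fun x => w x ^ (q + 2)) (ball x₀ r3) :=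
    (hwp.integrableOn_compact (isCompact_closedBall _ _)).mono_set (hB32.trans ball_subset_closedBall)
  have iw := iw3.mono_set hB3
  have hwp0 : ∀ y ∈ ball x₀ r3, 0 ≤ w y ^ (q + 2) := fun y hy =>
    Real.rpow_nonneg (zero_le_one.trans (hw1 y (hB32 hy))) _
  have iφ : IntegrableOn (fun x => (max (v x) 0) ^ (q + 2)) (ball x₀ r) :=
    integrableOn_of_contOn hrr (pospow_continuousOn hv.continuousOn (by linarith))
  have hJp := fun l => segAvg_fubini l hrh hwp3 iw3 hwp0
  have hJm := fun l => segAvg_fubini l hrh' hwp3 iw3 hwp0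
  have hw3 := hw.mono hB32
  have hw30 : ∀ y ∈ ball x₀ r3, 0 ≤ w y := fun y hy => zero_le_one.trans (hw1 y (hB32 hy))
  have jp := fun x (hx : x ∈ ball x₀ r) l => segAvg_jensen (ball_subset_closedBall hx) l hrh hw3 hw30
    (p := q + 2) (by linarith)
  have jm := fun x (hx : x ∈ ball x₀ r) l => segAvg_jensen (ball_subset_closedBall hx) l hrh' hw3 hw30
    (p := q + 2) (by linarith)
  -- continuity of the coefficients
  have hHu : ∀ i j, ContDiffOn ℝ 1 (fun y => H (y, u y, grad u y) i j) Ω := fun i j =>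
    (hH i j).1.comp ((jet_contDiffOn hΩ hu).of_le (by norm_num)) fun x hx => ⟨hx, mem_univ _, mem_univ _⟩
  have hpdv : ∀ j, ContinuousOn (pd j v) (ball x₀ r') := fun j =>
    (pd_contDiffOn (m := 0) isOpen_ball hv (by norm_num) j).continuousOn
  have hT : ContinuousOn (fun x => η x * (max (v x) 0) ^ (q - 1)) (ball x₀ r') :=
    hη.continuous.continuousOn.mul (pospow_continuousOn hv.continuousOn (by linarith))
  have hdiv : ∀ j, ContinuousOn (fun x => ∑ i, pd i (fun y =>
      newtonT 1 (hess u y - H (y, u y, grad u y)) i j) x) (ball x₀ r') := by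
    intro j
    have h1 : ContinuousOn (fun x => ∑ i, (pd i (fun y => H (y, u y, grad u y) i j) x -
        pd j (fun y => H (y, u y, grad u y) i i) x)) (ball x₀ r') :=
      continuousOn_finset_sum _ fun i _ =>
        (((pd_contDiffOn (m := 0) hΩ (hHu i j) (by norm_num) i).continuousOn).sub
        ((pd_contDiffOn (m := 0) hΩ (hHu i i) (by norm_num) j).continuousOn)).mono (hB'.trans hbR)
    refine h1.congr fun x hx => ?_
    exact pd_newton hn hΩ hu (hbR (hB' hx)) (fun i j y => H (y, u y, grad u y) i j)
      (fun y => H (y, u y, grad u y)) (fun _ _ _ => rfl)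
      (fun i j => ((hHu i j).contDiffAt (hΩ.mem_nhds (hbR (hB' hx)))).differentiableAt (by norm_num)) j
  have iA : IntegrableOn (fun x => η x * (max (v x) 0) ^ (q - 1) * ∑ j, (∑ i, pd i (fun y =>
                newtonT 1 (hess u y - H (y, u y, grad u y)) i j) x) * pd j v x) (ball x₀ r) :=
    integrableOn_of_contOn hrr (hT.mul (continuousOn_finset_sum _ fun j _ => (hdiv j).mul (hpdv j)))
  have hNc : ∀ i j, ContinuousOn (fun x => newtonT 1 (hess u x - H (x, u x, grad u x)) i j) (ball x₀ r') := by
    intro i j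
    have h2 : ∀ i j, ContinuousOn (fun x => (hess u x - H (x, u x, grad u x)) i j) (ball x₀ r') := fun i j =>
      ((hU2 i j).continuousOn.sub (hHu i j).continuousOn).mono (hB'.trans hbR)
    simp only [newtonT_one_apply hn]
    exact ((continuousOn_finset_sum _ fun k _ => h2 k k).mul continuousOn_const).sub (h2 i j)
  have iB : ∀ l, IntegrableOn (fun x => η x * (max (v x) 0) ^ (q - 1) *
      ∑ i, ∑ j, newtonT 1 (hess u x - H (x, u x, grad u x)) i j *
                ddq l h (fun y => H (y, u y, grad u y) i j) x) (ball x₀ r) := fun l =>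
    integrableOn_of_contOn hrr (hT.mul (continuousOn_finset_sum _ fun i _ => continuousOn_finset_sum _ fun j _ =>
      (hNc i j).mul (ddq_continuousOn l hr2 ((hHu i j).continuousOn.mono hbR))))
  -- integrate
  have iJ : IntegrableOn (fun x => ∑ l, (segAvg (fun y => w y ^ (q + 2)) l h x +
      segAvg (fun y => w y ^ (q + 2)) l (-h) x)) (ball x₀ r) :=
    integrable_finset_sum _ fun l _ => (hJp l).1.add (hJm l).1
  have hint : ∫ x in ball x₀ r, ((1 / q) * bigS H q η v u x - C₂ * (((max (v x) 0) ^ (q + 2) + w x ^ (q + 2)) +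
      ∑ l, (segAvg (fun y => w y ^ (q + 2)) l h x + segAvg (fun y => w y ^ (q + 2)) l (-h) x))) ≤
      ∫ x in ball x₀ r, ((η x * (max (v x) 0) ^ (q - 1) * ∑ j, (∑ i, pd i (fun y =>
                newtonT 1 (hess u y - H (y, u y, grad u y)) i j) x) * pd j v x) +
       ∑ l, η x * (max (v x) 0) ^ (q - 1) *
        ∑ i, ∑ j, newtonT 1 (hess u x - H (x, u x, grad u x)) i j *
                ddq l h (fun y => H (y, u y, grad u y) i j) x) := by
    refine setIntegral_mono_on ((hS.1.const_mul _).sub (((iφ.add iw).add iJ).const_mul _))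
      (iA.add (integrable_finset_sum _ fun l _ => iB l)) measurableSet_ball fun x hx => ?_
    refine le_trans ?_ (hpt x hx)
    refine sub_le_sub_left (mul_le_mul_of_nonneg_left ?_ hC₂0) _
    refine add_le_add le_rfl (Finset.sum_le_sum fun l _ => add_le_add (jp x hx l) (jm x hx l))
  have iφw : IntegrableOn (fun x => (max (v x) 0) ^ (q + 2) + w x ^ (q + 2)) (ball x₀ r) := iφ.add iw
  have iφwJ : IntegrableOn (fun x => ((max (v x) 0) ^ (q + 2) + w x ^ (q + 2)) +
      ∑ l, (segAvg (fun y => w y ^ (q + 2)) l h x + segAvg (fun y => w y ^ (q + 2)) l (-h) x)) (ball x₀ r) :=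
    iφw.add iJ
  have e1 : ∫ x in ball x₀ r, ((1 / q) * bigS H q η v u x - C₂ * (((max (v x) 0) ^ (q + 2) + w x ^ (q + 2)) +
      ∑ l, (segAvg (fun y => w y ^ (q + 2)) l h x + segAvg (fun y => w y ^ (q + 2)) l (-h) x))) =
      (1 / q) * (∫ x in ball x₀ r, bigS H q η v u x) - C₂ * ((∫ x in ball x₀ r, (max (v x) 0) ^ (q + 2)) +
      (∫ x in ball x₀ r, w x ^ (q + 2)) + ∑ l, ∫ x in ball x₀ r, (segAvg (fun y => w y ^ (q + 2)) l h x +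
      segAvg (fun y => w y ^ (q + 2)) l (-h) x)) := by
    rw [integral_sub (hS.1.const_mul _) (iφwJ.const_mul _), integral_const_mul, integral_const_mul,
      integral_add iφw iJ, integral_add iφ iw]
    congr 3
    exact integral_finset_sum _ fun l _ => (hJp l).1.add (hJm l).1
  have e2 := (integral_add iA (integrable_finset_sum Finset.univ fun l _ => iB l)).trans
    (congrArg _ (integral_finset_sum Finset.univ fun l _ => iB l))
  refine ge_iff_le.2 (le_trans ?_ (e1.symm.le.trans (hint.trans e2.le)))
  set X := ∫ x in ball x₀ r, (max (v x) 0) ^ (q + 2) with hX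
  set Y := ∫ x in ball x₀ r3, w x ^ (q + 2) with hY
  have hX0 : 0 ≤ X := integral_nonneg fun x => Real.rpow_nonneg (le_max_right _ _) _
  have hY0 : 0 ≤ Y := setIntegral_nonneg measurableSet_ball hwp0
  have hYr : ∫ x in ball x₀ r, w x ^ (q + 2) ≤ Y :=
    setIntegral_mono_set iw3 ((ae_restrict_iff' measurableSet_ball).2 (Filter.Eventually.of_forall hwp0))
      hB3.eventuallyLE
  have hJ : ∑ l, ∫ x in ball x₀ r, (segAvg (fun y => w y ^ (q + 2)) l h x +
      segAvg (fun y => w y ^ (q + 2)) l (-h) x) ≤ 2 * n * Y := by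
    have : ∀ l, ∫ x in ball x₀ r, (segAvg (fun y => w y ^ (q + 2)) l h x +
      segAvg (fun y => w y ^ (q + 2)) l (-h) x) ≤ 2 * Y := fun l => by
      rw [integral_add (hJp l).1 (hJm l).1]
      linarith [(hJp l).2, (hJm l).2]
    refine (Finset.sum_le_sum fun l _ => this l).trans (le_of_eq ?_)
    simp; ring
  have hφw : ∫ x in ball x₀ r, (max (v x) 0) ^ q * w x ^ 2 ≤ 2 * (Y + X) := by
    have h1 : ∫ x in ball x₀ r, (max (v x) 0) ^ q * w x ^ 2 ≤
        ∫ x in ball x₀ r, 2 * (w x ^ (q + 2) + (max (v x) 0) ^ (q + 2)) := by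
      refine setIntegral_mono_on (integrableOn_of_contOn hrr
        ((pospow_continuousOn hv.continuousOn (by linarith)).mul ((hw.mono hB').pow 2)))
        ((iw.add iφ).const_mul _) measurableSet_ball fun x hx => ?_
      exact young2 hq (hw30 x (hB3 hx)) (le_max_right _ _)
    rw [integral_const_mul, integral_add iw iφ] at h1
    linarith
  have hI0 : 0 ≤ ∫ x in ball x₀ r, (max (v x) 0) ^ q * w x ^ 2 :=
    integral_nonneg fun x => mul_nonneg (Real.rpow_nonneg (le_max_right _ _) _) (sq_nonneg _)
  exact final_arith n.cast_nonneg hR hM hc₀ hL0 hq hρ hρR hC₂0 hX0 hY0 hYr hJ hφw hI0 hS.2
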